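/- arXiv:1901.10472 — 7 statements merged into one kernel-verified Lean document; each statement's English description precedes it below -/
import Mathlib

section
/- Let m₁, m₂, m₃, m₄ ∈ ℝ³ be non-coplanar points, let M be the 4×4 matrix whose j-th column is (m_j, 1), and let M̃ ∈ ℝ^{3×4} be the upper 3×4 block of (M⁻¹)ᵀ. Then for every point s ∈ ℝ³, writing d_i := ‖s − m_i‖², one has s = (1/2) · M̃ · (‖m₁‖² − d₁, ‖m₂‖² − d₂, ‖m₃‖² − d₃, ‖m₄‖² − d₄)ᵀ. -/
open scoped RealInnerProductSpace

noncomputable section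

abbrev E3 := EuclideanSpace ℝ (Fin 3)

/-- The 4×4 matrix whose j-th column is `(m j, 1)`. -/
def micMatrix (m : Fin 4 → E3) : Matrix (Fin 4) (Fin 4) ℝ :=
  fun i j => if h : (i : ℕ) < 3 then m j ⟨(i : ℕ), h⟩ else 1

/-- The upper 3×4 block of `(M⁻¹)ᵀ`. -/
def micMatrixTilde (m : Fin 4 → E3) : Matrix (Fin 3) (Fin 4) ℝ :=
  fun i j => ((micMatrix m)⁻¹).transpose i.castSucc j

theorem micMatrix_det_ne (m : Fin 4 → E3) (hm : AffineIndependent ℝ m) :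
    (micMatrix m).det ≠ 0 := by
  intro h0
  obtain ⟨v, hv, hMv⟩ := Matrix.exists_mulVec_eq_zero_iff.mpr h0
  apply hv
  have h3 : ∑ j, v j = 0 := by
    have := congrFun hMv 3
    simpa [Matrix.mulVec, dotProduct, micMatrix] using this
  have hs : ∑ j, v j • m j = 0 := by
    ext k
    have := congrFun hMv k.castSucc
    simpa [Matrix.mulVec, dotProduct, micMatrix, mul_comm] using this
  have := affineIndependent_iff.mp hm Finset.univ v h3 hs
  funext j
  exact this j (Finset.mem_univ j)

/-- For non-coplanar microphones `m₁,…,m₄`, any point `s` is recovered from the squared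
distances `dᵢ = ‖s - mᵢ‖²` via `s = (1/2) · M̃ · (‖mᵢ‖² - dᵢ)ᵢ`. -/
theorem mirror_point_from_distances (m : Fin 4 → E3) (hm : AffineIndependent ℝ m)
    (s : E3) (d : Fin 4 → ℝ) (hd : ∀ i, d i = ‖s - m i‖ ^ 2) :
    ∀ k : Fin 3,
      s k = (1 / 2) * (micMatrixTilde m).mulVec (fun j => ‖m j‖ ^ 2 - d j) k := by
  intro k
  have hdet := micMatrix_det_ne m hm
  have hu : IsUnit (micMatrix m).det := isUnit_iff_ne_zero.mpr hdet
  let u : Fin 4 → ℝ := ![2 * s 0, 2 * s 1, 2 * s 2, -‖s‖ ^ 2]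
  have hb : (fun j => ‖m j‖ ^ 2 - d j) = (micMatrix m).transpose.mulVec u := by
    funext j
    rw [hd j]
    simp [u, Matrix.mulVec, dotProduct, micMatrix, Fin.sum_univ_four,
      EuclideanSpace.norm_sq_eq, Fin.sum_univ_three]
    ring
  have h1 : (micMatrixTilde m).mulVec (fun j => ‖m j‖ ^ 2 - d j) k
      = ((micMatrix m)⁻¹.transpose.mulVec (fun j => ‖m j‖ ^ 2 - d j)) k.castSucc := rfl
  rw [h1, hb, Matrix.mulVec_mulVec, ← Matrix.transpose_mul, Matrix.mul_nonsing_inv _ hu,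
    Matrix.transpose_one, Matrix.one_mulVec]
  fin_cases k <;> simp [u]

end
end

section
/- Let s, L, m ∈ ℝ³ with s ≠ L and ⟨s − L, s − m⟩ ≠ 0, and set τ := ‖s − L‖² / (2⟨s − L, s − m⟩). Then 0 < τ < 1 holds if and only if ⟨m, s − L⟩ < (1/2)⟨s + L, s − L⟩, i.e., if and only if m lies strictly on the same side as L of the plane {x : ⟨x, s − L⟩ = (1/2)⟨s + L, s − L⟩} (note that ⟨L, s − L⟩ < (1/2)⟨s + L, s − L⟩ always holds). -/
open scoped RealInnerProductSpace

noncomputable section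

/-- With `τ = ‖s-L‖²/(2⟨s-L, s-m⟩)`, one has `0 < τ < 1` iff `m` lies strictly on the same
side as `L` of the plane `{x : ⟨x, s-L⟩ = (1/2)⟨s+L, s-L⟩}`; moreover `L` always lies
strictly on that side. -/
theorem tau_in_unit_interval_iff (s L m : E3) (hsL : s ≠ L)
    (h : ⟪s - L, s - m⟫ ≠ 0)
    (τ : ℝ) (hτ : τ = ‖s - L‖ ^ 2 / (2 * ⟪s - L, s - m⟫)) :
    ((0 < τ ∧ τ < 1) ↔ ⟪m, s - L⟫ < (1 / 2) * ⟪s + L, s - L⟫) ∧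
      ⟪L, s - L⟫ < (1 / 2) * ⟪s + L, s - L⟫ := by
  have hN : 0 < ‖s - L‖ ^ 2 := by
    have := norm_pos_iff.mpr (sub_ne_zero.mpr hsL)
    positivity
  have e1 : ⟪m, s - L⟫ = (1 / 2) * ⟪s + L, s - L⟫ + ‖s - L‖ ^ 2 / 2 - ⟪s - L, s - m⟫ := by
    rw [← real_inner_self_eq_norm_sq]
    simp only [inner_sub_left, inner_sub_right, inner_add_left]
    rw [real_inner_comm s L, real_inner_comm s m, real_inner_comm L m]
    ring
  have e2 : ⟪L, s - L⟫ = (1 / 2) * ⟪s + L, s - L⟫ - ‖s - L‖ ^ 2 / 2 := by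
    rw [← real_inner_self_eq_norm_sq]
    simp only [inner_sub_left, inner_sub_right, inner_add_left]
    ring
  refine ⟨?_, by linarith⟩
  rw [e1, hτ]
  constructor
  · rintro ⟨h0, h1⟩
    have hD : 0 < 2 * ⟪s - L, s - m⟫ := (div_pos_iff_of_pos_left hN).mp h0
    rw [div_lt_one hD] at h1
    linarith
  · intro h2
    have hD : 0 < 2 * ⟪s - L, s - m⟫ := by linarith
    exact ⟨div_pos hN hD, (div_lt_one hD).mpr (by linarith)⟩

end
end

section
/- Let m₁, m₂, m₃, m₄ ∈ ℝ³ be non-coplanar points, let L, s ∈ ℝ³ with s ≠ L, and suppose ⟨s − L, s − m_i⟩ ≠ 0 for i = 1,…,4. Set τ_i := ‖s − L‖² / (2⟨s − L, s − m_i⟩) and x_i := (1 − τ_i)s + τ_i m_i. Then the four points x₁, x₂, x₃, x₄ are not collinear (they do not all lie on a common line). -/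
open scoped RealInnerProductSpace

noncomputable section

/-- For non-coplanar microphones, the four points `xᵢ = (1-τᵢ)s + τᵢmᵢ` with
`τᵢ = ‖s-L‖²/(2⟨s-L, s-mᵢ⟩)` are not collinear. -/
theorem wall_points_not_collinear (m : Fin 4 → E3) (hm : AffineIndependent ℝ m)
    (L s : E3) (hsL : s ≠ L) (h : ∀ i, ⟪s - L, s - m i⟫ ≠ 0)
    (τ : Fin 4 → ℝ) (hτ : ∀ i, τ i = ‖s - L‖ ^ 2 / (2 * ⟪s - L, s - m i⟫))
    (x : Fin 4 → E3) (hx : ∀ i, x i = (1 - τ i) • s + τ i • m i) :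
    ¬ Collinear ℝ (Set.range x) := by
  intro hc
  rw [collinear_iff_exists_forall_eq_smul_vadd] at hc
  obtain ⟨p, v, hv⟩ := hc
  have hτ0 : ∀ i, τ i ≠ 0 := by
    intro i
    rw [hτ i]
    exact div_ne_zero (pow_ne_zero _ (norm_ne_zero_iff.mpr (sub_ne_zero.mpr hsL)))
      (mul_ne_zero two_ne_zero (h i))
  have key : ∀ i, m i - s ∈ Submodule.span ℝ ({p - s, v} : Set E3) := by
    intro i
    obtain ⟨r, hr⟩ := hv (x i) ⟨i, rfl⟩
    rw [hx i, vadd_eq_add] at hr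
    have h1 : τ i • (m i - s) = (p - s) + r • v := by
      have h2 : τ i • (m i - s) = ((1 - τ i) • s + τ i • m i) - s := by module
      rw [h2, hr]; module
    have h3 : m i - s = (τ i)⁻¹ • ((p - s) + r • v) := by
      rw [← h1, smul_smul, inv_mul_cancel₀ (hτ0 i), one_smul]
    rw [h3]
    refine Submodule.smul_mem _ _ (Submodule.add_mem _ ?_ (Submodule.smul_mem _ _ ?_))
    · exact Submodule.subset_span (by simp)
    · exact Submodule.subset_span (by simp)
  have hle : vectorSpan ℝ (Set.range m) ≤ Submodule.span ℝ ({p - s, v} : Set E3) := by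
    rw [vectorSpan_def, Submodule.span_le]
    rintro _ ⟨_, ⟨i, rfl⟩, _, ⟨j, rfl⟩, rfl⟩
    have h4 := Submodule.sub_mem _ (key i) (key j)
    rw [sub_sub_sub_cancel_right] at h4
    exact h4
  have h5 : Module.finrank ℝ (vectorSpan ℝ (Set.range m)) = 3 :=
    hm.finrank_vectorSpan (by simp)
  have h6 := Submodule.finrank_mono hle
  have h7 : Module.finrank ℝ (Submodule.span ℝ ({p - s, v} : Set E3)) ≤ 2 := by
    classical
    have h8 := finrank_span_finset_le_card (R := ℝ) ({p - s, v} : Finset E3)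
    have h9 : ({p - s, v} : Finset E3).card ≤ 2 := Finset.card_le_two
    have h10 : ((({p - s, v} : Finset E3) : Set E3)) = {p - s, v} := by simp
    rw [h10] at h8
    exact h8.trans h9
  omega

end
end

section
/- Let s₁, s₂, s₃, s₄ ∈ ℝ³ be four points that are not all equal, and let m₁^ini, m₂^ini, m₃^ini, m₄^ini ∈ ℝ³ be non-coplanar points. Then there exist a rotation R ∈ SO(3) and a translation t ∈ ℝ³ such that, setting m_i := R m_i^ini + t for i = 1,…,4, one has f_M(‖s₁ − m₁‖², ‖s₂ − m₂‖², ‖s₃ − m₃‖², ‖s₄ − m₄‖²) ≠ 0, where f_M is formed from the pairwise squared distances of m₁,…,m₄. -/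
open scoped RealInnerProductSpace

noncomputable section

/-- The polynomial `f_M` given by the Cayley–Menger-type determinant formed from the
pairwise squared distances `D i j = ‖m i - m j‖²` between the four microphones. -/
def fM (m : Fin 4 → E3) (u : Fin 4 → ℝ) : ℝ :=
  let d : Fin 4 → Fin 4 → ℝ := fun i j => ‖m i - m j‖ ^ 2
  Matrix.det !![0,   u 0,   u 1,   u 2,   u 3,   1;
                u 0, d 0 0, d 0 1, d 0 2, d 0 3, 1;
                u 1, d 1 0, d 1 1, d 1 2, d 1 3, 1;
                u 2, d 2 0, d 2 1, d 2 2, d 2 3, 1;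
                u 3, d 3 0, d 3 1, d 3 2, d 3 3, 1;
                1,   1,     1,     1,     1,     0]

set_option maxHeartbeats 2000000 in
lemma exists_point_of_fM (m : Fin 4 → E3) (u : Fin 4 → ℝ) (hm : AffineIndependent ℝ m)
    (h : fM m u = 0) : ∃ x : E3, ∀ i, u i = ‖x - m i‖ ^ 2 := by
  unfold fM at h
  obtain ⟨k, hk, hk0⟩ := Matrix.exists_mulVec_eq_zero_iff.mpr h
  have e0 := congrFun hk0 0
  have e1 := congrFun hk0 1
  have e2 := congrFun hk0 2
  have e3 := congrFun hk0 3
  have e4 := congrFun hk0 4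
  have e5 := congrFun hk0 5
  simp only [Matrix.mulVec, dotProduct, Fin.sum_univ_succ, EuclideanSpace.norm_sq_eq] at e0 e1 e2 e3 e4 e5
  simp [Fin.succ] at e0 e1 e2 e3 e4 e5
  set p := k 0
  set q0 := k 1
  set q1 := k 2
  set q2 := k 3
  set q3 := k 4
  set r := k 5
  obtain ⟨X, hX⟩ : ∃ X : Fin 3 → ℝ, ∀ l, X l = q0 * m 0 l + q1 * m 1 l + q2 * m 2 l + q3 * m 3 l := ⟨_, fun _ => rfl⟩
  have X0 := hX 0
  have X1 := hX 1
  have X2 := hX 2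
  obtain ⟨S, hS⟩ : ∃ S : Fin 4 → ℝ, ∀ i, S i = m i 0 ^ 2 + m i 1 ^ 2 + m i 2 ^ 2 := ⟨_, fun _ => rfl⟩
  obtain ⟨N, hN⟩ : ∃ N, N = q0 * S 0 + q1 * S 1 + q2 * S 2 + q3 * S 3 := ⟨_, rfl⟩
  have g : ∀ i, p * u i = p * S i - N + 2 * (m i 0 * X 0 + m i 1 * X 1 + m i 2 * X 2) - r := by
    intro i
    rw [hN, X0, X1, X2]
    simp only [hS]
    fin_cases i <;> simp
    · linear_combination e1 - (m 0 0 ^ 2 + m 0 1 ^ 2 + m 0 2 ^ 2) * e5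
    · linear_combination e2 - (m 1 0 ^ 2 + m 1 1 ^ 2 + m 1 2 ^ 2) * e5
    · linear_combination e3 - (m 2 0 ^ 2 + m 2 1 ^ 2 + m 2 2 ^ 2) * e5
    · linear_combination e4 - (m 3 0 ^ 2 + m 3 1 ^ 2 + m 3 2 ^ 2) * e5
  by_cases hp : p = 0
  · exfalso
    have hsq : X 0 ^ 2 + X 1 ^ 2 + X 2 ^ 2 = 0 := by
      have g0 := g 0
      have g1 := g 1
      have g2 := g 2
      have g3 := g 3
      rw [hp] at g0 g1 g2 g3 e5
      linear_combination (-1/2) * (q0 * g0 + q1 * g1 + q2 * g2 + q3 * g3) + (1/2)*(N+r) * e5 + X 0 * X0 + X 1 * X1 + X 2 * X2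
    have z0 : X 0 = 0 := by
      apply pow_eq_zero_iff (two_ne_zero) |>.mp
      linarith [sq_nonneg (X 0), sq_nonneg (X 1), sq_nonneg (X 2)]
    have z1 : X 1 = 0 := by
      apply pow_eq_zero_iff (two_ne_zero) |>.mp
      linarith [sq_nonneg (X 0), sq_nonneg (X 1), sq_nonneg (X 2)]
    have z2 : X 2 = 0 := by
      apply pow_eq_zero_iff (two_ne_zero) |>.mp
      linarith [sq_nonneg (X 0), sq_nonneg (X 1), sq_nonneg (X 2)]
    have hq := (affineIndependent_iff.mp hm) Finset.univ ![q0,q1,q2,q3]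
      (by simp [Fin.sum_univ_four]; linarith)
      (by
        ext l
        have := hX l
        simp [Fin.sum_univ_four]
        rw [← this]
        fin_cases l <;> simp [z0, z1, z2])
    have y0 : q0 = 0 := hq 0 (by simp)
    have y1 : q1 = 0 := hq 1 (by simp)
    have y2 : q2 = 0 := hq 2 (by simp)
    have y3 : q3 = 0 := hq 3 (by simp)
    have hr : r = 0 := by
      rw [y0, y1, y2, y3] at e0
      linarith
    apply hk
    ext i
    fin_cases i <;> assumption
  · refine ⟨WithLp.toLp 2 (fun l => - X l / p), fun i => ?_⟩
    have key : X 0 ^ 2 + X 1 ^ 2 + X 2 ^ 2 = - p * (N + r) := by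
      have g0 := g 0
      have g1 := g 1
      have g2 := g 2
      have g3 := g 3
      linear_combination (-1/2) * (q0 * g0 + q1 * g1 + q2 * g2 + q3 * g3) + (1/2) * p * e0 + (1/2) * p * hN + (1/2)*(N+r) * e5 + X 0 * X0 + X 1 * X1 + X 2 * X2
    have gi := g i
    rw [hS] at gi
    simp only [EuclideanSpace.norm_sq_eq, Fin.sum_univ_three]
    simp
    field_simp
    linear_combination p * gi - key

lemma eq_zero_of_inner (m : Fin 4 → E3) (hm : AffineIndependent ℝ m) (y : E3)
    (h : ∀ i, ⟪y, m i - m 0⟫ = 0) : y = 0 := by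
  have h1 : affineSpan ℝ (Set.range m) = ⊤ := by
    rw [hm.affineSpan_eq_top_iff_card_eq_finrank_add_one]; simp
  have h2 : vectorSpan ℝ (Set.range m) = ⊤ := by
    rw [← direction_affineSpan, h1, AffineSubspace.direction_top]
  rw [vectorSpan_range_eq_span_range_vsub_right ℝ m 0] at h2
  have h3 : y ∈ Submodule.span ℝ (Set.range fun i => m i -ᵥ m 0) := by rw [h2]; trivial
  have h4 : ∀ z ∈ Submodule.span ℝ (Set.range fun i => m i -ᵥ m 0), ⟪y, z⟫ = 0 := by
    intro z hz
    induction hz using Submodule.span_induction with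
    | mem x hx => obtain ⟨i, rfl⟩ := hx; exact h i
    | zero => simp
    | add a b _ _ ha hb => rw [inner_add_right, ha, hb, add_zero]
    | smul c a _ ha => rw [inner_smul_right, ha, mul_zero]
  exact inner_self_eq_zero.mp (h4 y h3)

lemma exists_inner (m : Fin 4 → E3) (hm : AffineIndependent ℝ m) (c : Fin 4 → ℝ) :
    ∃ y : E3, ∀ i, ⟪y, m i - m 0⟫ = c i - c 0 := by
  let T : E3 →ₗ[ℝ] (Fin 3 → ℝ) :=
    { toFun := fun y i => ⟪y, m i.succ - m 0⟫
      map_add' := fun a b => by ext i; simp [inner_add_left]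
      map_smul' := fun a b => by ext i; simp [inner_smul_left] }
  have hT : Function.Injective T := by
    rw [injective_iff_map_eq_zero]
    intro y hy
    apply eq_zero_of_inner m hm
    intro i
    refine Fin.cases (by simp) (fun j => ?_) i
    exact congrFun hy j
  have hs : Function.Surjective T :=
    (LinearMap.injective_iff_surjective_of_finrank_eq_finrank (by simp)).mp hT
  obtain ⟨y, hy⟩ := hs (fun i => c i.succ - c 0)
  refine ⟨y, fun i => ?_⟩
  refine Fin.cases (by simp) (fun j => ?_) i
  exact congrFun hy j

lemma key_identity (s m : Fin 4 → E3) (hm : AffineIndependent ℝ m) (t v : E3)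
    (hv : ∀ i, ⟪v, m i - m 0⟫ = ⟪t, s i - s 0⟫)
    (h : ∀ a : ℝ, fM (fun i => m i + a • t) (fun i => ‖s i - (m i + a • t)‖ ^ 2) = 0) :
    ‖v‖ ^ 2 = 2 * ⟪v, t⟫ := by
  obtain ⟨y, hy⟩ := exists_inner m hm (fun i => ⟪s i, m i⟫ - ‖s i‖ ^ 2 / 2)
  have main : ∀ a : ℝ, ‖s 0 - (m 0 + a • t)‖ ^ 2 = ‖y + a • v - (m 0 + a • t)‖ ^ 2 := by
    intro a
    have hm' : AffineIndependent ℝ (fun i => m i + a • t) := by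
      rw [affineIndependent_iff] at hm ⊢
      intro S w hw hw2
      apply hm S w hw
      simpa [Finset.sum_add_distrib, ← Finset.sum_smul, hw] using hw2
    obtain ⟨x, hx⟩ := exists_point_of_fM _ _ hm' (h a)
    have : x - (y + a • v) = 0 := by
      apply eq_zero_of_inner m hm
      intro i
      have a1 := hx i
      have a2 := hx 0
      have a3 := hv i
      have a4 := hy i
      simp only [← real_inner_self_eq_norm_sq, inner_sub_left, inner_sub_right, inner_add_left,
        inner_add_right, real_inner_smul_left, real_inner_smul_right] at a1 a2 a3 a4 ⊢
      rw [real_inner_comm (s i) (m i), real_inner_comm (s 0) (m 0), real_inner_comm x (m i),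
        real_inner_comm x (m 0), real_inner_comm (s i) t, real_inner_comm (s 0) t] at *
      linear_combination (1/2) * (a1 - a2) - a4 - a * a3
    have hx' : x = y + a • v := sub_eq_zero.mp this
    rw [← hx']
    exact hx 0
  have b0 := main 0
  have b1 := main 1
  have b2 := main (-1)
  simp only [← real_inner_self_eq_norm_sq, inner_sub_left, inner_sub_right, inner_add_left,
        inner_add_right, real_inner_smul_left, real_inner_smul_right] at b0 b1 b2 ⊢
  rw [real_inner_comm t v] at *
  linarith

/-- Claim 2: for any four points `s₁,…,s₄` not all equal and any non-coplanar initial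
microphone positions, there is a placement (rotation `R ∈ SO(3)` and translation `t`) of
the microphones such that the echo sorting criterion does not vanish. -/
theorem exists_good_placement_fixed_source (s : Fin 4 → E3) (hs : ¬ ∀ i j, s i = s j)
    (mini : Fin 4 → E3) (hm : AffineIndependent ℝ mini) :
    ∃ (R : Matrix (Fin 3) (Fin 3) ℝ) (t : E3),
      R * R.transpose = 1 ∧ R.det = 1 ∧
      fM (fun i => Matrix.toEuclideanLin R (mini i) + t)
        (fun i => ‖s i - (Matrix.toEuclideanLin R (mini i) + t)‖ ^ 2) ≠ 0 := by
  by_contra hcon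
  push Not at hcon
  obtain ⟨i0, hi0⟩ : ∃ i, s i ≠ s 0 := by
    by_contra hc
    push Not at hc
    exact hs fun i j => by rw [hc i, hc j]
  set t := s i0 - s 0 with ht
  obtain ⟨v, hv⟩ := exists_inner mini hm (fun i => ⟪t, s i⟫)
  have step : ∀ R : Matrix (Fin 3) (Fin 3) ℝ, R * R.transpose = 1 → R.det = 1 →
      ‖v‖ ^ 2 = 2 * ⟪Matrix.toEuclideanLin R v, t⟫ := by
    intro R hR hd
    have hR' : R.transpose * R = 1 := mul_eq_one_comm.mp hR
    have iso : ∀ a b : E3, ⟪Matrix.toEuclideanLin R a, Matrix.toEuclideanLin R b⟫ = ⟪a, b⟫ := by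
      intro a b
      simp only [EuclideanSpace.inner_eq_star_dotProduct, Matrix.ofLp_toLpLin, Matrix.toLin'_apply,
        star_trivial]
      rw [Matrix.dotProduct_mulVec, Matrix.vecMul_mulVec, hR', Matrix.vecMul_one]
    have hinj : Function.Injective (Matrix.toEuclideanLin R : E3 →ₗ[ℝ] E3) := by
      rw [injective_iff_map_eq_zero]
      intro a ha
      have := iso a a
      rw [ha, inner_zero_left] at this
      exact inner_self_eq_zero.mp this.symm
    have hmm : AffineIndependent ℝ (fun i => Matrix.toEuclideanLin R (mini i)) := 
      hm.map' (Matrix.toEuclideanLin R : E3 →ₗ[ℝ] E3).toAffineMap hinj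
    have := key_identity s _ hmm t (Matrix.toEuclideanLin R v)
      (fun i => by rw [← map_sub, iso, hv, inner_sub_right]) (fun a => hcon R (a • t) hR hd)
    rw [← this, ← real_inner_self_eq_norm_sq, ← real_inner_self_eq_norm_sq, iso]
  have d (x y z : ℝ) (hx : x * x = 1) (hy : y * y = 1) (hz : z * z = 1) (hxyz : x * y * z = 1) :
      ‖v‖ ^ 2 = 2 * (x * v 0 * t 0 + y * v 1 * t 1 + z * v 2 * t 2) := by
    rw [step (Matrix.diagonal ![x, y, z])
      (by rw [Matrix.diagonal_transpose, Matrix.diagonal_mul_diagonal, ← Matrix.diagonal_one]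
          congr 1; ext i; fin_cases i <;> simpa)
      (by simpa [Fin.prod_univ_three] using hxyz)]
    simp [EuclideanSpace.inner_eq_star_dotProduct, dotProduct, Fin.sum_univ_three, Matrix.mulVec_diagonal]
    ring
  have d1 := d 1 1 1 (by norm_num) (by norm_num) (by norm_num) (by norm_num)
  have d2 := d 1 (-1) (-1) (by norm_num) (by norm_num) (by norm_num) (by norm_num)
  have d3 := d (-1) 1 (-1) (by norm_num) (by norm_num) (by norm_num) (by norm_num)
  have d4 := d (-1) (-1) 1 (by norm_num) (by norm_num) (by norm_num) (by norm_num)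
  have hv0 : ‖v‖ ^ 2 = 0 := by linarith
  have hvz : v = 0 := by simpa using hv0
  have h5 := hv i0
  simp only [hvz, inner_zero_left] at h5
  rw [← inner_sub_right, ← ht] at h5
  have : t = 0 := inner_self_eq_zero.mp h5.symm
  exact hi0 (sub_eq_zero.mp this)

end
end

section
/- Let 𝒲 be a finite set of affine planes in ℝ³ (the walls), let L ∈ ℝ³ with L ∉ W for every W ∈ 𝒲, and for W ∈ 𝒲 let s_W := ref_W(L) be the reflection of L across W. Let m₁^ini,…,m₄^ini ∈ ℝ³ be non-coplanar points. Then the set of pairs (t, R) ∈ ℝ³ × SO(3) for which there exist walls W₁, W₂, W₃, W₄ ∈ 𝒲, not all equal, with f_M(‖s_{W₁} − m₁‖², ‖s_{W₂} − m₂‖², ‖s_{W₃} − m₃‖², ‖s_{W₄} − m₄‖²) = 0 (where m_i := R m_i^ini + t) has measure zero with respect to the product of the Lebesgue measure on ℝ³ and the Haar probability measure on SO(3). -/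
open MeasureTheory
open scoped RealInnerProductSpace

noncomputable section

open scoped Classical in
/-- The reflection (mirror image) of a point across an affine subspace of ℝ³,
as a total function. -/
def reflAff (W : AffineSubspace ℝ E3) (L : E3) : E3 :=
  if h : Nonempty W then
    haveI := h
    EuclideanGeometry.reflection W L
  else L

/-- `W` is an affine plane in ℝ³. -/
def IsPlane (W : AffineSubspace ℝ E3) : Prop :=
  (W : Set E3).Nonempty ∧ Module.finrank ℝ W.direction = 2

instance : MeasurableSpace (Matrix (Fin 3) (Fin 3) ℝ) :=
  inferInstanceAs (MeasurableSpace (Fin 3 → Fin 3 → ℝ))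

theorem Jdet (k : ℝ) : Matrix.det !![0,0,0,0,1,0; 0,-2,0,0,0,0; 0,0,-2,0,0,0; 0,0,0,-2,0,0; 1,0,0,0,0,0; 0,0,0,0,0,-2*k] = -16*k := by
  simp [Matrix.det_succ_row_zero, Fin.sum_univ_succ, Fin.succAbove]
  ring

set_option maxHeartbeats 4000000 in
theorem fM_eq (m : Fin 4 → E3) (u : Fin 4 → ℝ) (y : E3)
    (h : ∀ i, u i - u 0 = ‖m i - m 0‖^2 - 2 * inner ℝ y (m i - m 0)) :
    fM m u = -16 * (u 0 - ‖y‖^2) *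
      (Matrix.det (Matrix.of fun (i j : Fin 3) => m i.succ j - m 0 j))^2 := by
  set k := u 0 - ‖y‖^2 with hk
  set J : Matrix (Fin 6) (Fin 6) ℝ := !![0,0,0,0,1,0; 0,-2,0,0,0,0; 0,0,-2,0,0,0; 0,0,0,-2,0,0; 1,0,0,0,0,0; 0,0,0,0,0,-2*k] with hJ
  set p : Fin 4 → Fin 3 → ℝ := fun i j => m i j - m 0 j with hp
  set q : Fin 4 → ℝ := fun i => p i 0 ^2 + p i 1 ^2 + p i 2 ^2 with hq
  set F : Matrix (Fin 6) (Fin 6) ℝ := !![u 0, y 0, y 1, y 2, 1, 1;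
    0, 0, 0, 0, 1, 0;
    q 1, p 1 0, p 1 1, p 1 2, 1, 0;
    q 2, p 2 0, p 2 1, p 2 2, 1, 0;
    q 3, p 3 0, p 3 1, p 3 2, 1, 0;
    1, 0, 0, 0, 0, 0] with hF
  have hFd : F.det ^2 = (Matrix.det (Matrix.of fun (i j : Fin 3) => m i.succ j - m 0 j))^2 := by
    have : F.det = - (Matrix.det (Matrix.of fun (i j : Fin 3) => m i.succ j - m 0 j)) ∨ F.det = (Matrix.det (Matrix.of fun (i j : Fin 3) => m i.succ j - m 0 j)) := by
      have e : (Matrix.of fun (i j : Fin 3) => m i.succ j - m 0 j) = !![p 1 0, p 1 1, p 1 2; p 2 0, p 2 1, p 2 2; p 3 0, p 3 1, p 3 2] := by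
        ext i j; fin_cases i <;> fin_cases j <;> simp [hp]
      rw [e, hF]
      clear_value p q
      simp [Matrix.det_succ_row_zero, Fin.sum_univ_succ, Fin.succAbove]
      first | (left; ring1) | (right; ring1)
    rcases this with h | h <;> rw [h]; ring
  have hns : ∀ x : E3, ‖x‖^2 = x 0 ^2 + x 1 ^2 + x 2 ^2 := by
    intro x; rw [EuclideanSpace.norm_sq_eq]; simp [Fin.sum_univ_succ]; ring
  have hu : ∀ i, u i = u 0 + q i - 2 * (y 0 * p i 0 + y 1 * p i 1 + y 2 * p i 2) := by
    intro i
    have := h i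
    rw [hns] at this
    simp [PiLp.inner_apply, Fin.sum_univ_succ] at this
    simp only [hq, hp]
    linarith
  have key : fM m u = (F * J * F.transpose).det := by
    unfold fM
    have hd : ∀ i j, ‖m i - m j‖^2 = q i + q j - 2 * (p i 0 * p j 0 + p i 1 * p j 1 + p i 2 * p j 2) := by
      intro i j; rw [hns]; simp [hq, hp]; ring
    have p0 : ∀ j, p 0 j = 0 := by intro j; simp [hp]
    have q0 : q 0 = 0 := by simp [hq, p0]
    have hk' : k = u 0 - (y 0 ^2 + y 1 ^2 + y 2 ^2) := by rw [hk, hns]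
    simp only [hd]
    rw [hu 1, hu 2, hu 3, q0, p0, p0, p0]
    congr 1
    rw [hF, hJ, hk']
    clear_value p q
    clear hu hd
    ext i j
    fin_cases i <;> fin_cases j <;> simp [Matrix.mul_apply, Fin.sum_univ_succ] <;> ring
  rw [key, Matrix.det_mul, Matrix.det_mul, Matrix.det_transpose, hJ, Jdet, ← hFd]
  ring

theorem refl_ne (W W' : AffineSubspace ℝ E3) (hW : IsPlane W) (hW' : IsPlane W') (L : E3)
    (h : L ∉ W) (h' : L ∉ W') (hne : reflAff W L = reflAff W' L) : W = W' := by
  have key : ∀ V : AffineSubspace ℝ E3, IsPlane V → L ∉ V →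
      V = AffineSubspace.perpBisector L (reflAff V L) := by
    intro V hV hLV
    have : Nonempty V := hV.1.to_subtype
    have hr : reflAff V L = EuclideanGeometry.reflection V L := by
      unfold reflAff; rw [dif_pos]
    rw [hr]
    have hle : V ≤ AffineSubspace.perpBisector L (EuclideanGeometry.reflection V L) := by
      intro x hx
      rw [AffineSubspace.mem_perpBisector_iff_dist_eq,
        EuclideanGeometry.dist_reflection_eq_of_mem V hx]
    refine AffineSubspace.eq_of_direction_eq_of_nonempty_of_le ?_ hV.1 hle
    apply Submodule.eq_of_le_of_finrank_eq (AffineSubspace.direction_le hle)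
    rw [hV.2, AffineSubspace.direction_perpBisector]
    have : Fact (Module.finrank ℝ E3 = 2 + 1) := ⟨by simp⟩
    rw [Submodule.finrank_orthogonal_span_singleton (n := 2)]
    intro h0
    rw [vsub_eq_zero_iff_eq] at h0
    exact hLV ((EuclideanGeometry.reflection_eq_self_iff _).1 h0)
  rw [key W hW h, key W' hW' h', hne]

theorem toE_apply (R : Matrix (Fin 3) (Fin 3) ℝ) (v : E3) (i : Fin 3) :
    Matrix.toEuclideanLin R v i = ∑ k, R i k * v k := by
  simp [Matrix.toLpLin_apply, Matrix.mulVec, dotProduct]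

theorem measurable_entry (i j : Fin 3) : Measurable (fun R : Matrix (Fin 3) (Fin 3) ℝ => R i j) := by
  have h1 : Measurable (fun R : Fin 3 → Fin 3 → ℝ => R i j) := by fun_prop
  exact h1

theorem measurable_mulLeft (g : Matrix (Fin 3) (Fin 3) ℝ) :
    Measurable (fun R : Matrix (Fin 3) (Fin 3) ℝ => g * R) := by
  have h : ∀ i j, Measurable (fun R : Matrix (Fin 3) (Fin 3) ℝ => (g * R) i j) := by
    intro i j
    simp only [Matrix.mul_apply]
    exact Finset.measurable_sum _ fun k _ => (measurable_entry k j).const_mul _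
  have : Measurable (fun R : Matrix (Fin 3) (Fin 3) ℝ => (fun i j => (g * R) i j : Fin 3 → Fin 3 → ℝ)) :=
    measurable_pi_lambda _ fun i => measurable_pi_lambda _ fun j => h i j
  exact this

theorem quad_zero (a b c : ℝ) (x y z : ℝ) (hxy : x ≠ y) (hxz : x ≠ z) (hyz : y ≠ z)
    (h1 : a * x^2 + b * x + c = 0) (h2 : a * y^2 + b * y + c = 0) (h3 : a * z^2 + b * z + c = 0) :
    a = 0 ∧ b = 0 ∧ c = 0 := by
  have e1 : (x - y) * (a * (x + y) + b) = 0 := by linear_combination h1 - h2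
  have e2 : (x - z) * (a * (x + z) + b) = 0 := by linear_combination h1 - h3
  have e1' := (mul_eq_zero.1 e1).resolve_left (sub_ne_zero.2 hxy)
  have e2' := (mul_eq_zero.1 e2).resolve_left (sub_ne_zero.2 hxz)
  have e3 : a * (y - z) = 0 := by linear_combination e1' - e2'
  have ha := (mul_eq_zero.1 e3).resolve_right (sub_ne_zero.2 hyz)
  subst ha
  have hb : b = 0 := by linarith
  subst hb
  exact ⟨rfl, rfl, by linarith⟩

theorem quad_finite (a b c : ℝ) (ha : a ≠ 0) : {x : ℝ | a * x^2 + b * x + c = 0}.Finite := by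
  have hp : (Polynomial.C a * Polynomial.X^2 + Polynomial.C b * Polynomial.X + Polynomial.C c) ≠ 0 := by
    intro h
    have := congrArg (fun p => Polynomial.coeff p 2) h
    simp at this
    exact ha this
  refine (Polynomial.finite_setOfPred_isRoot hp).subset ?_
  intro x hx
  simpa [Polynomial.IsRoot] using hx

/-- Rotation in the plane of the first two coordinates (up to cyclic shift by `j`). -/
theorem exists_rot (j : Fin 3) (q : ℝ) : ∃ g ∈ Matrix.specialOrthogonalGroup (Fin 3) ℝ,
    ∀ v : Fin 3 → ℝ, (1 + q^2) * ∑ k, g j k * v k = (1 - q^2) * v j - 2 * q * v (j+1) := by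
  have h0 : (1 + q^2) ≠ 0 := by positivity
  have h1 : ((1 - q^2)/(1+q^2))^2 + (2*q/(1+q^2))^2 = 1 := by field_simp; ring
  set c := (1 - q^2)/(1+q^2) with hc
  set s := 2*q/(1+q^2) with hs
  have hc' : (1 + q^2) * c = 1 - q^2 := by rw [hc]; field_simp
  have hs' : (1 + q^2) * s = 2 * q := by rw [hs]; field_simp
  clear_value c s
  fin_cases j
  · refine ⟨!![c, -s, 0; s, c, 0; 0, 0, 1], ?_, ?_⟩
    · rw [Matrix.mem_specialOrthogonalGroup_iff, Matrix.mem_orthogonalGroup_iff]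
      constructor
      · ext i k; fin_cases i <;> fin_cases k <;> simp [Matrix.mul_apply, Fin.sum_univ_succ] <;> linarith
      · simp [Matrix.det_fin_three]; linarith
    · intro v; simp [Fin.sum_univ_succ]; linear_combination v 0 * hc' - v 1 * hs'
  · refine ⟨!![1, 0, 0; 0, c, -s; 0, s, c], ?_, ?_⟩
    · rw [Matrix.mem_specialOrthogonalGroup_iff, Matrix.mem_orthogonalGroup_iff]
      constructor
      · ext i k; fin_cases i <;> fin_cases k <;> simp [Matrix.mul_apply, Fin.sum_univ_succ] <;> linarith
      · simp [Matrix.det_fin_three]; linarith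
    · intro v; simp [Fin.sum_univ_succ]; linear_combination v 1 * hc' - v 2 * hs'
  · refine ⟨!![c, 0, s; 0, 1, 0; -s, 0, c], ?_, ?_⟩
    · rw [Matrix.mem_specialOrthogonalGroup_iff, Matrix.mem_orthogonalGroup_iff]
      constructor
      · ext i k; fin_cases i <;> fin_cases k <;> simp [Matrix.mul_apply, Fin.sum_univ_succ] <;> linarith
      · simp [Matrix.det_fin_three]; linarith
    · intro v; simp [Fin.sum_univ_succ]; linear_combination v 2 * hc' - v 0 * hs'

theorem ae_R (μ : Measure (Matrix (Fin 3) (Fin 3) ℝ)) [IsProbabilityMeasure μ]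
    (hinv : ∀ g ∈ Matrix.specialOrthogonalGroup (Fin 3) ℝ, μ.map (fun R => g * R) = μ)
    (j : Fin 3) (b : Fin 3 → ℝ) (c : ℝ) (hc : c ≠ 0) :
    μ {R | ∑ k, R j k * b k = c} = 0 := by
  by_contra hne
  set Z := {R : Matrix (Fin 3) (Fin 3) ℝ | ∑ k, R j k * b k = c} with hZ
  have hZm : MeasurableSet Z :=
    measurableSet_eq_fun (Finset.measurable_sum _ fun k _ => (measurable_entry j k).mul_const _)
      measurable_const
  choose g hg hgv using fun n : ℕ => exists_rot j (n : ℝ)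
  have hm : ∀ n, μ ((fun R => g n * R) ⁻¹' Z) = μ Z := by
    intro n
    rw [← Measure.map_apply (measurable_mulLeft _) hZm, hinv _ (hg n)]
  obtain ⟨t, ht, hu⟩ := bergelson' (μ := μ) (s := fun n => (fun R => g n * R) ⁻¹' Z)
    (fun n => measurable_mulLeft _ hZm) hne (fun n => (hm n).ge)
  obtain ⟨u, hut, hcard⟩ := ht.exists_subset_card_eq 3
  have := hu hut u.finite_toSet
  obtain ⟨R, hR⟩ := nonempty_of_measure_ne_zero this.ne'
  rw [Finset.card_eq_three] at hcard
  obtain ⟨x, y, z, hxy, hxz, hyz, rfl⟩ := hcard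
  have key : ∀ n, R ∈ (fun R => g n * R) ⁻¹' Z →
      (-(R.mulVec b j) - c) * (n:ℝ)^2 + (-2 * R.mulVec b (j+1)) * n + (R.mulVec b j - c) = 0 := by
    intro n hn
    have h1 := hgv n (R.mulVec b)
    have h2 : ∑ k, (g n * R) j k * b k = c := hn
    have h3 : ∑ k, g n j k * R.mulVec b k = ∑ k, (g n * R) j k * b k := by
      change (g n).mulVec (R.mulVec b) j = (g n * R).mulVec b j
      rw [Matrix.mulVec_mulVec]
    rw [h3, h2] at h1
    linear_combination -h1
  simp only [Set.mem_iInter] at hR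
  obtain ⟨h1, h2, h3⟩ := quad_zero _ _ _ (x:ℝ) y z (by exact_mod_cast hxy) (by exact_mod_cast hxz)
    (by exact_mod_cast hyz) (key x (hR x (by simp))) (key y (hR y (by simp))) (key z (hR z (by simp)))
  exact hc (by linarith)

theorem continuous_cm {X : Type*} [TopologicalSpace X] (u : Fin 4 → X → ℝ)
    (d : Fin 4 → Fin 4 → X → ℝ) (hu : ∀ i, Continuous (u i)) (hd : ∀ i j, Continuous (d i j)) :
    Continuous (fun x => Matrix.det !![0,   u 0 x,   u 1 x,   u 2 x,   u 3 x,   1;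
                u 0 x, d 0 0 x, d 0 1 x, d 0 2 x, d 0 3 x, 1;
                u 1 x, d 1 0 x, d 1 1 x, d 1 2 x, d 1 3 x, 1;
                u 2 x, d 2 0 x, d 2 1 x, d 2 2 x, d 2 3 x, 1;
                u 3 x, d 3 0 x, d 3 1 x, d 3 2 x, d 3 3 x, 1;
                1,   1,     1,     1,     1,     0]) := by
  refine Continuous.matrix_det ?_
  refine continuous_matrix fun i j => ?_
  fin_cases i <;> fin_cases j <;>
    first | exact continuous_const | exact hu 0 | exact hu 1 | exact hu 2 | exact hu 3 | exact hd _ _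

theorem continuous_fM_gen {X : Type*} [TopologicalSpace X] (m : X → Fin 4 → E3)
    (u : X → Fin 4 → ℝ) (hm : ∀ i, Continuous (fun x => m x i))
    (hu : ∀ i, Continuous (fun x => u x i)) : Continuous (fun x => fM (m x) (u x)) :=
  continuous_cm (fun i x => u x i) (fun i j x => ‖m x i - m x j‖ ^ 2) hu
    (fun i j => (((hm i).sub (hm j)).norm.pow 2))

theorem continuous_fM (a s : Fin 4 → E3) :
    Continuous (fun p : E3 × Matrix (Fin 3) (Fin 3) ℝ =>
      fM (fun i => Matrix.toEuclideanLin p.2 (a i) + p.1)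
        (fun i => ‖s i - (Matrix.toEuclideanLin p.2 (a i) + p.1)‖ ^ 2)) := by
  have hm : ∀ i, Continuous (fun p : E3 × Matrix (Fin 3) (Fin 3) ℝ =>
      Matrix.toEuclideanLin p.2 (a i) + p.1) := by
    intro i
    refine Continuous.add ?_ continuous_fst
    simp only [Matrix.toLpLin_apply]
    refine (PiLp.continuous_toLp 2 _).comp ?_
    exact continuous_snd.matrix_mulVec continuous_const
  exact continuous_fM_gen _ _ hm fun i => ((continuous_const.sub (hm i)).norm.pow 2)

instance : BorelSpace (Matrix (Fin 3) (Fin 3) ℝ) :=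
  inferInstanceAs (BorelSpace (Fin 3 → Fin 3 → ℝ))

instance : SecondCountableTopology (Matrix (Fin 3) (Fin 3) ℝ) :=
  inferInstanceAs (SecondCountableTopology (Fin 3 → Fin 3 → ℝ))

theorem det_ne (a : Fin 4 → E3) (ha : AffineIndependent ℝ a) :
    (Matrix.of fun (i j : Fin 3) => a i.succ j - a 0 j).det ≠ 0 := by
  rw [affineIndependent_iff_linearIndependent_vsub ℝ a 0] at ha
  have h2 := ha.comp (fun i : Fin 3 => ⟨i.succ, Fin.succ_ne_zero i⟩)
    (by intro i j h; simpa using h)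
  have h3 := h2.map' (WithLp.linearEquiv 2 ℝ (Fin 3 → ℝ)).toLinearMap (LinearEquiv.ker _)
  have h4 : IsUnit (Matrix.of fun (i j : Fin 3) => a i.succ j - a 0 j) := by
    rw [← Matrix.linearIndependent_rows_iff_isUnit]
    exact h3
  rw [Matrix.isUnit_iff_isUnit_det] at h4
  exact h4.ne_zero

theorem inner_three (x y : E3) : inner ℝ x y = ∑ k, x k * y k := by
  simp [PiLp.inner_apply, mul_comm]

theorem norm_rot (R : Matrix (Fin 3) (Fin 3) ℝ) (hR : R.transpose * R = 1) (v w : E3) :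
    inner ℝ (Matrix.toEuclideanLin R v) (Matrix.toEuclideanLin R w) = inner ℝ v w := by
  have h : ∀ x y : E3, inner ℝ x y = x.ofLp ⬝ᵥ y.ofLp := by
    intro x y; rw [inner_three]; rfl
  rw [h, h]
  simp only [Matrix.ofLp_toLpLin, Matrix.toLin'_apply]
  rw [Matrix.dotProduct_mulVec, ← Matrix.mulVec_transpose, Matrix.mulVec_mulVec, hR,
    Matrix.one_mulVec]

theorem solve_lin (M : Matrix (Fin 3) (Fin 3) ℝ) (hM : M.det ≠ 0) (w : Fin 3 → ℝ) :
    ∃ y : E3, ∀ i, ∑ k, y k * M i k = w i := by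
  refine ⟨WithLp.toLp 2 (M⁻¹.mulVec w), fun i => ?_⟩
  have h1 : M.mulVec (M⁻¹.mulVec w) = w := by
    rw [Matrix.mulVec_mulVec, Matrix.mul_nonsing_inv _ (isUnit_iff_ne_zero.2 hM),
      Matrix.one_mulVec]
  have h2 := congrFun h1 i
  rw [← h2]
  exact Finset.sum_congr rfl fun k _ => mul_comm _ _

set_option maxHeartbeats 1000000 in
theorem slice_null (a s : Fin 4 → E3) (ha : AffineIndependent ℝ a)
    (j : Fin 3) (b : E3)
    (hb : ∀ i, inner ℝ b (a i - a 0) = s i j - s 0 j)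
    (R : Matrix (Fin 3) (Fin 3) ℝ) (hR : R ∈ Matrix.specialOrthogonalGroup (Fin 3) ℝ)
    (hRb : ∑ k, R j k * b k ≠ ‖b‖^2 / 2) :
    (volume : Measure E3) {t | fM (fun i => Matrix.toEuclideanLin R (a i) + t)
        (fun i => ‖s i - (Matrix.toEuclideanLin R (a i) + t)‖ ^ 2) = 0} = 0 := by
  rw [Matrix.mem_specialOrthogonalGroup_iff] at hR
  have hRt : R.transpose * R = 1 := (Matrix.mem_orthogonalGroup_iff' _ _).1 hR.1
  have hdet := det_ne a ha
  set A := (Matrix.of fun (i j : Fin 3) => a i.succ j - a 0 j) with hA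
  set T := Matrix.toEuclideanLin R with hT
  have hP : ∀ t : E3, (Matrix.of fun (i k : Fin 3) => (T (a i.succ) + t) k - (T (a 0) + t) k)
      = A * R.transpose := by
    intro t
    ext i k
    simp [hT, toE_apply, Matrix.mul_apply, hA, mul_comm, mul_sub, Finset.sum_sub_distrib]
  have hPd : (A * R.transpose).det ≠ 0 := by
    rw [Matrix.det_mul, Matrix.det_transpose, hR.2]; simpa using hdet
  set e : E3 := EuclideanSpace.single j 1 with he
  have hin : ∀ v : E3, inner ℝ v e = v j := by
    intro v; rw [inner_three]; simp [he]
  have hee : ‖e‖ = 1 := by simp [he]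
  have hmeas : MeasurableSet {t : E3 | fM (fun i => T (a i) + t)
        (fun i => ‖s i - (T (a i) + t)‖ ^ 2) = 0} := by
    have : Continuous (fun t : E3 => fM (fun i => T (a i) + t)
        (fun i => ‖s i - (T (a i) + t)‖ ^ 2)) :=
      continuous_fM_gen _ _ (fun i => continuous_const.add continuous_id)
        (fun i => ((continuous_const.sub (continuous_const.add continuous_id)).norm.pow 2))
    exact measurableSet_eq_fun this.measurable measurable_const
  have main : ∀ᵐ t ∂(volume : Measure E3), t ∈ {t : E3 | fM (fun i => T (a i) + t)
        (fun i => ‖s i - (T (a i) + t)‖ ^ 2) = 0}ᶜ := by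
    refine ae_mem_of_ae_add_linearMap_mem (LinearMap.toSpanSingleton ℝ E3 e) volume volume
      hmeas.compl ?_
    intro t
    -- base solution
    set w : Fin 4 → ℝ := fun i => (‖T (a i) - T (a 0)‖^2 - ‖s i - (T (a i) + t)‖^2
      + ‖s 0 - (T (a 0) + t)‖^2) / 2 with hw
    obtain ⟨y0, hy0⟩ : ∃ y0 : E3, ∀ i, inner ℝ y0 (T (a i) - T (a 0)) = w i := by
      obtain ⟨y, hy⟩ := solve_lin _ hPd fun i => w i.succ
      refine ⟨y, fun i => ?_⟩
      refine Fin.cases ?_ (fun i => ?_) i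
      · simp only [hw]; simp
      · rw [← hy i, inner_three, ← hP 0]
        refine Finset.sum_congr rfl fun k _ => ?_
        simp
    set z : E3 := T b - e with hz
    have hTb : T b j = ∑ k, R j k * b k := by rw [hT, toE_apply]
    have hα : 1 - ‖z‖^2 ≠ 0 := by
      rw [hz, norm_sub_sq_real, hin, hee, hTb]
      have : ‖T b‖^2 = ‖b‖^2 := by
        rw [← real_inner_self_eq_norm_sq, ← real_inner_self_eq_norm_sq, norm_rot R hRt]
      rw [this]
      intro h; apply hRb; linarith
    have hfin := quad_finite (1 - ‖z‖^2)
      (-2 * (s 0 - (T (a 0) + t)) j - 2 * inner ℝ y0 z)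
      (‖s 0 - (T (a 0) + t)‖^2 - ‖y0‖^2) hα
    have hz0 : ∀ᵐ x : ℝ, x ∉ {x : ℝ | (1 - ‖z‖^2) * x^2 +
      (-2 * (s 0 - (T (a 0) + t)) j - 2 * inner ℝ y0 z) * x +
      (‖s 0 - (T (a 0) + t)‖^2 - ‖y0‖^2) = 0} :=
      measure_eq_zero_iff_ae_notMem.1 (hfin.measure_zero _)
    filter_upwards [hz0] with x hx
    intro hx0
    apply hx
    simp only [Set.mem_ofPred_eq, LinearMap.toSpanSingleton_apply] at hx0 ⊢
    have hu : ∀ i, ‖s i - (T (a i) + (t + x • e))‖^2 = ‖s i - (T (a i) + t)‖^2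
        - 2 * x * (s i - (T (a i) + t)) j + x^2 := by
      intro i
      rw [show s i - (T (a i) + (t + x • e)) = (s i - (T (a i) + t)) - x • e by abel,
        norm_sub_sq_real, inner_smul_right, hin, norm_smul, hee]
      simp
      ring
    rw [fM_eq _ _ (y0 + x • z), hP] at hx0
    · have := (mul_eq_zero.1 hx0).resolve_right (pow_ne_zero 2 hPd)
      rw [hu, norm_add_sq_real, inner_smul_right, norm_smul, mul_pow] at this
      simp only [Real.norm_eq_abs, sq_abs] at this
      linarith
    · intro i
      rw [hu, hu, show T (a i) + (t + x • e) - (T (a 0) + (t + x • e)) = T (a i) - T (a 0) by abel,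
        inner_add_left, inner_smul_left, hy0]
      have h1 : inner ℝ z (T (a i) - T (a 0)) = s i j - s 0 j - (T (a i) j - T (a 0) j) := by
        rw [hz, inner_sub_left, ← map_sub, norm_rot R hRt, hb, real_inner_comm, hin]
        simp
      rw [h1, hw]
      simp
      ring
  exact measure_eq_zero_iff_ae_notMem.2 main

theorem tuple_null (a s : Fin 4 → E3) (ha : AffineIndependent ℝ a)
    (hs : ∃ i, s i ≠ s 0)
    (μ : Measure (Matrix (Fin 3) (Fin 3) ℝ)) [IsProbabilityMeasure μ]
    (hsupp : μ ((Matrix.specialOrthogonalGroup (Fin 3) ℝ : Set (Matrix (Fin 3) (Fin 3) ℝ))ᶜ) = 0)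
    (hinv : ∀ g ∈ Matrix.specialOrthogonalGroup (Fin 3) ℝ,
      μ.map (fun R => g * R) = μ) :
    ((volume : Measure E3).prod μ)
      {p : E3 × Matrix (Fin 3) (Fin 3) ℝ |
          fM (fun i => Matrix.toEuclideanLin p.2 (a i) + p.1)
            (fun i => ‖s i - (Matrix.toEuclideanLin p.2 (a i) + p.1)‖ ^ 2)
            = 0} = 0 := by
  obtain ⟨i0, hi0⟩ := hs
  obtain ⟨j, hj⟩ : ∃ j, s i0 j ≠ s 0 j := by
    by_contra! h
    exact hi0 (by ext j; exact h j)
  have hdet := det_ne a ha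
  obtain ⟨b, hb⟩ : ∃ b : E3, ∀ i, inner ℝ b (a i - a 0) = s i j - s 0 j := by
    obtain ⟨y, hy⟩ := solve_lin _ hdet fun i => s i.succ j - s 0 j
    refine ⟨y, fun i => ?_⟩
    refine Fin.cases ?_ (fun i => ?_) i
    · simp
    · rw [← hy i, inner_three]
      refine Finset.sum_congr rfl fun k _ => ?_
      simp
  have hb0 : b ≠ 0 := by
    rintro rfl
    have := hb i0
    rw [inner_zero_left] at this
    exact hj (by linarith)
  have hbn : ‖b‖^2/2 ≠ 0 := by
    have : 0 < ‖b‖ := norm_pos_iff.2 hb0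
    positivity
  have hR := ae_R μ hinv j b _ hbn
  have hmeas : MeasurableSet {p : E3 × Matrix (Fin 3) (Fin 3) ℝ |
          fM (fun i => Matrix.toEuclideanLin p.2 (a i) + p.1)
            (fun i => ‖s i - (Matrix.toEuclideanLin p.2 (a i) + p.1)‖ ^ 2)
            = 0} :=
    measurableSet_eq_fun (continuous_fM a s).measurable measurable_const
  rw [Measure.prod_apply_symm hmeas, lintegral_eq_zero_iff (measurable_measure_prodMk_right hmeas)]
  filter_upwards [measure_eq_zero_iff_ae_notMem.1 hR, measure_eq_zero_iff_ae_notMem.1 hsupp] with R h1 h2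
  exact slice_null a s ha j b hb R (not_not.1 h2) h1

/-- Theorem 2.1 (fixed loudspeaker): for a finite set of walls, a loudspeaker `L` not on
any wall, and non-coplanar microphones mounted on a drone, the set of drone placements
`(t, R) ∈ ℝ³ × SO(3)` for which the echo sorting criterion vanishes for some walls that
are not all equal has measure zero with respect to the product of the Lebesgue measure
on ℝ³ and the Haar probability measure on SO(3) (encoded as a left-invariant probability
measure concentrated on SO(3) inside the space of 3×3 matrices). -/
theorem bad_drone_placements_measure_zero_fixed_source
    (𝒲 : Set (AffineSubspace ℝ E3)) (hfin : 𝒲.Finite) (hplane : ∀ W ∈ 𝒲, IsPlane W)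
    (L : E3) (hL : ∀ W ∈ 𝒲, L ∉ W)
    (mini : Fin 4 → E3) (hm : AffineIndependent ℝ mini)
    (μ : Measure (Matrix (Fin 3) (Fin 3) ℝ)) [IsProbabilityMeasure μ]
    (hsupp : μ ((Matrix.specialOrthogonalGroup (Fin 3) ℝ : Set (Matrix (Fin 3) (Fin 3) ℝ))ᶜ) = 0)
    (hinv : ∀ g ∈ Matrix.specialOrthogonalGroup (Fin 3) ℝ,
      μ.map (fun R => g * R) = μ) :
    ((volume : Measure E3).prod μ)
      {p : E3 × Matrix (Fin 3) (Fin 3) ℝ |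
        p.2 ∈ Matrix.specialOrthogonalGroup (Fin 3) ℝ ∧
        ∃ W : Fin 4 → AffineSubspace ℝ E3, (∀ i, W i ∈ 𝒲) ∧ (¬ ∀ i j, W i = W j) ∧
          fM (fun i => Matrix.toEuclideanLin p.2 (mini i) + p.1)
            (fun i => ‖reflAff (W i) L - (Matrix.toEuclideanLin p.2 (mini i) + p.1)‖ ^ 2)
            = 0} = 0 := by
  have : Finite 𝒲 := hfin
  have hnull : ((volume : Measure E3).prod μ) (⋃ W : {W : Fin 4 → 𝒲 // ¬ ∀ i j, W i = W j},
      {p : E3 × Matrix (Fin 3) (Fin 3) ℝ |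
        fM (fun i => Matrix.toEuclideanLin p.2 (mini i) + p.1)
          (fun i => ‖reflAff (W.1 i) L - (Matrix.toEuclideanLin p.2 (mini i) + p.1)‖ ^ 2)
            = 0}) = 0 := by
    refine measure_iUnion_null fun W => ?_
    refine tuple_null mini (fun i => reflAff (W.1 i) L) hm ?_ μ hsupp hinv
    by_contra! h
    apply W.2
    have h0 : ∀ i, W.1 i = W.1 0 := fun i => Subtype.ext
      (refl_ne _ _ (hplane _ (W.1 i).2) (hplane _ (W.1 0).2) L (hL _ (W.1 i).2)
        (hL _ (W.1 0).2) (h i))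
    intro i j
    rw [h0 i, h0 j]
  refine measure_mono_null ?_ hnull
  rintro p ⟨-, W, hW, hne, hp⟩
  refine Set.mem_iUnion.2 ⟨⟨fun i => ⟨W i, hW i⟩, ?_⟩, hp⟩
  intro h
  exact hne fun i j => congrArg Subtype.val (h i j)

end
end

section
/- Let 𝒲 be a finite set of affine planes in ℝ³ (the walls), let L ∈ ℝ³ with L ∉ W for every W ∈ 𝒲, and for W ∈ 𝒲 let s_W := ref_W(L). Then the set of microphone configurations (m₁, m₂, m₃, m₄) ∈ (ℝ³)⁴ ≅ ℝ¹² for which there exist walls W₁, W₂, W₃, W₄ ∈ 𝒲, not all equal, with f_M(‖s_{W₁} − m₁‖², ‖s_{W₂} − m₂‖², ‖s_{W₃} − m₃‖², ‖s_{W₄} − m₄‖²) = 0 (f_M being formed from the pairwise squared distances of the m_i) has Lebesgue measure zero in ℝ¹². -/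
open MeasureTheory
open scoped RealInnerProductSpace

noncomputable section

theorem refl_inj (W W' : AffineSubspace ℝ E3) (L : E3) (h : IsPlane W) (h' : IsPlane W')
    (hL : L ∉ W) (hL' : L ∉ W') (he : reflAff W L = reflAff W' L) : W = W' := by
  have key : ∀ V : AffineSubspace ℝ E3, IsPlane V → L ∉ V →
      midpoint ℝ L (reflAff V L) ∈ V ∧ V.direction = (ℝ ∙ (L - reflAff V L))ᗮ := by
    intro V hV hLV
    have hne : Nonempty V := hV.1.to_subtype
    have hr : reflAff V L = EuclideanGeometry.reflection V L := by
      unfold reflAff; rw [dif_pos hne]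
    set p : E3 := (EuclideanGeometry.orthogonalProjection V L : E3) with hp
    have hpV : p ∈ V := EuclideanGeometry.orthogonalProjection_mem L
    have hr2 : EuclideanGeometry.reflection V L = p - L + p := by
      rw [EuclideanGeometry.reflection_apply']; rfl
    have hpL : L - p ∈ V.directionᗮ :=
      EuclideanGeometry.vsub_orthogonalProjection_mem_direction_orthogonal V L
    have hd : L - reflAff V L = (2:ℝ) • (L - p) := by
      rw [hr, hr2, two_smul]; abel
    have hne0 : L - p ≠ 0 := by
      intro h0
      rw [sub_eq_zero] at h0
      exact hLV (h0 ▸ hpV)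
    refine ⟨?_, ?_⟩
    · have : midpoint ℝ L (reflAff V L) = p := by
        rw [hr, hr2, midpoint_eq_smul_add]
        have : L + (p - L + p) = (2:ℝ) • p := by rw [two_smul]; abel
        rw [this, smul_smul]; simp
      rw [this]; exact hpV
    · apply Submodule.eq_of_le_of_finrank_eq
      · intro x hx
        rw [Submodule.mem_orthogonal_singleton_iff_inner_right, hd, inner_smul_left,
          Submodule.inner_left_of_mem_orthogonal hx hpL, mul_zero]
      · have hne1 : L - reflAff V L ≠ 0 := by
          rw [hd]; exact smul_ne_zero two_ne_zero hne0
        have := Submodule.finrank_add_finrank_orthogonal (ℝ ∙ (L - reflAff V L))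
        rw [finrank_span_singleton hne1, finrank_euclideanSpace_fin] at this
        rw [hV.2]; omega
  obtain ⟨a, b⟩ := key W h hL
  obtain ⟨a', b'⟩ := key W' h' hL'
  rw [he] at a b
  exact AffineSubspace.ext_of_direction_eq (b.trans b'.symm) ⟨_, a, a'⟩

theorem null_of_line {E : Type*} [NormedAddCommGroup E] [NormedSpace ℝ E] [MeasurableSpace E]
    [BorelSpace E] [FiniteDimensional ℝ E] (μ : Measure E) [μ.IsAddHaarMeasure]
    (F : E → ℝ) (hF : Continuous F) (x₀ : E) (hx₀ : F x₀ ≠ 0)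
    (hpoly : ∀ v : E, ∃ p : Polynomial ℝ, ∀ t : ℝ, F (x₀ + t • v) = p.eval t) :
    μ {x | F x = 0} = 0 := by
  have hms : MeasurableSet {q : E × ℝ | F (x₀ + q.2 • q.1) = 0} :=
    (isClosed_eq (by fun_prop) continuous_const).measurableSet
  have h1 : (μ.prod (volume : Measure ℝ)) {q : E × ℝ | F (x₀ + q.2 • q.1) = 0} = 0 := by
    rw [Measure.measure_prod_null hms]
    refine Filter.Eventually.of_forall fun v => ?_
    obtain ⟨p, hp⟩ := hpoly v
    have hp0 : p ≠ 0 := by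
      rintro rfl
      have := hp 0
      simp at this
      exact hx₀ this
    have : (Prod.mk v ⁻¹' {q : E × ℝ | F (x₀ + q.2 • q.1) = 0}) ⊆ p.rootSet ℝ := by
      intro t ht
      simp only [Set.mem_preimage, Set.mem_ofPred_eq] at ht
      rw [Polynomial.mem_rootSet]
      exact ⟨hp0, by rw [Polynomial.coe_aeval_eq_eval, ← hp, ht]⟩
    exact ((p.rootSet_finite ℝ).subset this).measure_zero _
  have h2 := Measure.measure_ae_null_of_prod_null
    (by rw [← Measure.prod_swap, Measure.map_apply measurable_swap
      (measurable_swap hms)]; exact h1 :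
      ((volume : Measure ℝ).prod μ) (Prod.swap ⁻¹' {q : E × ℝ | F (x₀ + q.2 • q.1) = 0}) = 0)
  have h3 : ∀ᵐ t : ℝ, t ≠ 0 := by simp [ae_iff]
  obtain ⟨t, ht, ht0⟩ := (h2.and h3).exists
  have h4 : (Prod.mk t ⁻¹' (Prod.swap ⁻¹' {q : E × ℝ | F (x₀ + q.2 • q.1) = 0}))
      = (t • ·) ⁻¹' ((x₀ + ·) ⁻¹' {x | F x = 0}) := rfl
  have ht' : μ ((t • ·) ⁻¹' ((x₀ + ·) ⁻¹' {x | F x = 0})) = 0 := by rw [← h4]; exact ht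
  rw [Measure.addHaar_preimage_smul μ ht0, measure_preimage_add] at ht'
  rcases mul_eq_zero.1 ht' with h | h
  · exfalso
    have : |(t ^ Module.finrank ℝ E)⁻¹| > 0 := by positivity
    rw [ENNReal.ofReal_eq_zero] at h
    linarith
  · exact h

def IsPolyFun (g : ℝ → ℝ) : Prop := ∃ p : Polynomial ℝ, ∀ t, g t = p.eval t

theorem isPolyFun_const (c : ℝ) : IsPolyFun fun _ => c := ⟨Polynomial.C c, by simp⟩

theorem isPolyFun_normSq (a b : E3) : IsPolyFun fun t => ‖a + t • b‖ ^ 2 := by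
  refine ⟨Polynomial.C (‖a‖ ^ 2) + Polynomial.C (2 * inner ℝ a b) * Polynomial.X
    + Polynomial.C (‖b‖ ^ 2) * Polynomial.X ^ 2, fun t => ?_⟩
  beta_reduce
  rw [norm_add_sq_real, inner_smul_right, norm_smul]
  simp [mul_pow]
  ring

theorem isPolyFun_det (M : ℝ → Matrix (Fin 6) (Fin 6) ℝ)
    (h : ∀ i j, IsPolyFun fun t => M t i j) : IsPolyFun fun t => (M t).det := by
  choose p hp using h
  refine ⟨(Matrix.of p).det, fun t => ?_⟩
  beta_reduce
  rw [← Polynomial.coe_evalRingHom, RingHom.map_det]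
  have hM : M t = (Polynomial.evalRingHom t).mapMatrix (Matrix.of p) := by
    ext i j
    simp [hp]
  rw [hM]

theorem aux_poly (u : Fin 4 → ℝ → ℝ) (d : Fin 4 → Fin 4 → ℝ → ℝ)
    (hu : ∀ i, IsPolyFun (u i)) (hd : ∀ i j, IsPolyFun (d i j)) :
    IsPolyFun fun t => Matrix.det
      !![0,   u 0 t,   u 1 t,   u 2 t,   u 3 t,   1;
         u 0 t, d 0 0 t, d 0 1 t, d 0 2 t, d 0 3 t, 1;
         u 1 t, d 1 0 t, d 1 1 t, d 1 2 t, d 1 3 t, 1;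
         u 2 t, d 2 0 t, d 2 1 t, d 2 2 t, d 2 3 t, 1;
         u 3 t, d 3 0 t, d 3 1 t, d 3 2 t, d 3 3 t, 1;
         1,   1,     1,     1,     1,     0] := by
  have h0 : IsPolyFun fun _ => 0 := isPolyFun_const 0
  have h1 : IsPolyFun fun _ => 1 := isPolyFun_const 1
  apply isPolyFun_det
  intro i j
  fin_cases i <;> fin_cases j <;> simp <;> first | assumption | exact hu _ | exact hd _ _

theorem fM_poly (s x v : Fin 4 → E3) :
    IsPolyFun fun t => fM (x + t • v) (fun i => ‖s i - (x + t • v) i‖ ^ 2) := by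
  have hd : ∀ i j, IsPolyFun fun t : ℝ => ‖(x + t • v) i - (x + t • v) j‖ ^ 2 := by
    intro i j
    have h : ∀ t : ℝ, (x + t • v) i - (x + t • v) j = (x i - x j) + t • (v i - v j) := by
      intro t
      rw [Pi.add_apply, Pi.add_apply, Pi.smul_apply, Pi.smul_apply, smul_sub]; abel
    simp only [h]
    exact isPolyFun_normSq _ _
  have hu : ∀ i, IsPolyFun fun t : ℝ => ‖s i - (x + t • v) i‖ ^ 2 := by
    intro i
    have h : ∀ t : ℝ, s i - (x + t • v) i = (s i - x i) + t • (- v i) := by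
      intro t
      rw [Pi.add_apply, Pi.smul_apply, smul_neg]; abel
    simp only [h]
    exact isPolyFun_normSq _ _
  have := aux_poly (fun i (t : ℝ) => ‖s i - (x + t • v) i‖ ^ 2)
    (fun i j (t : ℝ) => ‖(x + t • v) i - (x + t • v) j‖ ^ 2) hu hd
  simp only [fM]
  exact this

theorem fM_cont (s : Fin 4 → E3) :
    Continuous fun m : Fin 4 → E3 => fM m (fun i => ‖s i - m i‖ ^ 2) := by
  unfold fM
  apply Continuous.matrix_det
  apply continuous_matrix
  intro i j
  fin_cases i <;> fin_cases j <;> simp <;> fun_prop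

theorem det_calc (a b c q : ℝ) : Matrix.det
    !![0, 0, a + q, b + q, c + q, 1;
       0, 0, q, q, q, 1;
       a + q, q, 0, 2 * q, 2 * q, 1;
       b + q, q, 2 * q, 0, 2 * q, 1;
       c + q, q, 2 * q, 2 * q, 0, 1;
       1, 1, 1, 1, 1, 0] = 4 * q ^ 2 * (a ^ 2 + b ^ 2 + c ^ 2) := by
  simp [Matrix.det_succ_row_zero, Fin.sum_univ_succ, Fin.succAbove]
  ring

theorem fM_witness (s : Fin 4 → E3) (hs : ∃ i : Fin 3, s i.succ ≠ s 0) :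
    ∃ m : Fin 4 → E3, fM m (fun i => ‖s i - m i‖ ^ 2) ≠ 0 := by
  let e : Fin 3 → E3 := fun i => EuclideanSpace.single i 1
  let m : ℝ → Fin 4 → E3 := fun t => Fin.cons (s 0) (fun i => s 0 + t • e i)
  let w : ℝ → Fin 3 → ℝ := fun t i => ‖s i.succ - s 0‖ ^ 2 - 2 * t * (s i.succ - s 0) i
  have he : ∀ i, ‖e i‖ = 1 := fun i => by simp [e]
  have hu : ∀ t i, ‖s i.succ - m t i.succ‖ ^ 2 = w t i + t ^ 2 := by
    intro t i
    have : s i.succ - m t i.succ = (s i.succ - s 0) - t • e i := by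
      simp only [m, Fin.cons_succ]; abel
    rw [this, norm_sub_sq_real, inner_smul_right, norm_smul, he]
    have h2 : inner ℝ (s i.succ - s 0) (e i) = (s i.succ - s 0) i := by
      simp [e, EuclideanSpace.inner_single_right]
    rw [h2]
    simp [w]
    ring
  have hd0 : ∀ t i, ‖m t 0 - m t (Fin.succ i)‖ ^ 2 = t ^ 2 := by
    intro t i
    simp [m, norm_smul, he]
  have hd0' : ∀ t i, ‖m t (Fin.succ i) - m t 0‖ ^ 2 = t ^ 2 := by
    intro t i
    simp [m, norm_smul, he]
  have hd : ∀ t (i j : Fin 3), i ≠ j → ‖m t i.succ - m t j.succ‖ ^ 2 = 2 * t ^ 2 := by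
    intro t i j hij
    have : m t i.succ - m t j.succ = t • (e i - e j) := by
      simp only [m, Fin.cons_succ, smul_sub]; abel
    have h2 : inner ℝ (e i) (e j) = 0 := by
      simp [e, EuclideanSpace.inner_single_right, hij.symm]
    rw [this, norm_smul, mul_pow, norm_sub_sq_real, he, he, h2]
    simp
    ring
  have hval : ∀ t, fM (m t) (fun i => ‖s i - m t i‖ ^ 2)
      = 4 * (t ^ 2) ^ 2 * (w t 0 ^ 2 + w t 1 ^ 2 + w t 2 ^ 2) := by
    intro t
    have h00 : ‖s 0 - m t 0‖ ^ 2 = 0 := by simp [m]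
    have u1 : ‖s 1 - m t 1‖ ^ 2 = w t 0 + t ^ 2 := hu t 0
    have u2 : ‖s 2 - m t 2‖ ^ 2 = w t 1 + t ^ 2 := hu t 1
    have u3 : ‖s 3 - m t 3‖ ^ 2 = w t 2 + t ^ 2 := hu t 2
    have a1 : ‖m t 0 - m t 1‖ ^ 2 = t ^ 2 := hd0 t 0
    have a2 : ‖m t 0 - m t 2‖ ^ 2 = t ^ 2 := hd0 t 1
    have a3 : ‖m t 0 - m t 3‖ ^ 2 = t ^ 2 := hd0 t 2
    have b1 : ‖m t 1 - m t 0‖ ^ 2 = t ^ 2 := hd0' t 0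
    have b2 : ‖m t 2 - m t 0‖ ^ 2 = t ^ 2 := hd0' t 1
    have b3 : ‖m t 3 - m t 0‖ ^ 2 = t ^ 2 := hd0' t 2
    have c12 : ‖m t 1 - m t 2‖ ^ 2 = 2 * t ^ 2 := hd t 0 1 (by decide)
    have c13 : ‖m t 1 - m t 3‖ ^ 2 = 2 * t ^ 2 := hd t 0 2 (by decide)
    have c23 : ‖m t 2 - m t 3‖ ^ 2 = 2 * t ^ 2 := hd t 1 2 (by decide)
    have c21 : ‖m t 2 - m t 1‖ ^ 2 = 2 * t ^ 2 := hd t 1 0 (by decide)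
    have c31 : ‖m t 3 - m t 1‖ ^ 2 = 2 * t ^ 2 := hd t 2 0 (by decide)
    have c32 : ‖m t 3 - m t 2‖ ^ 2 = 2 * t ^ 2 := hd t 2 1 (by decide)
    have z : ∀ i, ‖m t i - m t i‖ ^ 2 = 0 := by intro i; simp
    rw [← det_calc]
    simp only [fM, h00, u1, u2, u3, a1, a2, a3, b1, b2, b3, c12, c13, c23, c21, c31, c32, z]
  obtain ⟨i, hi⟩ := hs
  have hpos : 0 < ‖s i.succ - s 0‖ ^ 2 := by
    have := norm_pos_iff.2 (sub_ne_zero.2 hi)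
    positivity
  have hw : ∃ t : ℝ, t ≠ 0 ∧ w t i ≠ 0 := by
    by_contra! hcon
    have h1 := hcon 1 (by norm_num)
    have h2 := hcon 2 (by norm_num)
    simp only [w] at h1 h2
    linarith
  obtain ⟨t, ht, hwt⟩ := hw
  refine ⟨m t, ?_⟩
  rw [hval]
  have hsum : 0 < w t 0 ^ 2 + w t 1 ^ 2 + w t 2 ^ 2 := by
    have hp : 0 < w t i ^ 2 := by positivity
    have h0 := sq_nonneg (w t 0)
    have h1 := sq_nonneg (w t 1)
    have h2 := sq_nonneg (w t 2)
    fin_cases i <;> simp at hp ⊢ <;> linarith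
  positivity

/-- Corollary (independently placed microphones): for a finite set of walls and a
loudspeaker `L` not on any wall, the set of microphone configurations
`(m₁,…,m₄) ∈ (ℝ³)⁴ ≅ ℝ¹²` for which the echo sorting criterion vanishes for some walls
that are not all equal has Lebesgue measure zero. -/
theorem bad_microphone_configurations_measure_zero
    (𝒲 : Set (AffineSubspace ℝ E3)) (hfin : 𝒲.Finite) (hplane : ∀ W ∈ 𝒲, IsPlane W)
    (L : E3) (hL : ∀ W ∈ 𝒲, L ∉ W) :
    volume {m : Fin 4 → E3 |
      ∃ W : Fin 4 → AffineSubspace ℝ E3, (∀ i, W i ∈ 𝒲) ∧ (¬ ∀ i j, W i = W j) ∧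
        fM m (fun i => ‖reflAff (W i) L - m i‖ ^ 2) = 0} = 0 := by
  have hsub : {m : Fin 4 → E3 |
      ∃ W : Fin 4 → AffineSubspace ℝ E3, (∀ i, W i ∈ 𝒲) ∧ (¬ ∀ i j, W i = W j) ∧
        fM m (fun i => ‖reflAff (W i) L - m i‖ ^ 2) = 0} ⊆
      ⋃ W ∈ {W : Fin 4 → AffineSubspace ℝ E3 | (∀ i, W i ∈ 𝒲) ∧ ¬ ∀ i j, W i = W j},
        {m : Fin 4 → E3 | fM m (fun i => ‖reflAff (W i) L - m i‖ ^ 2) = 0} := by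
    rintro m ⟨W, h1, h2, h3⟩
    exact Set.mem_biUnion (show W ∈ {W : Fin 4 → AffineSubspace ℝ E3 |
      (∀ i, W i ∈ 𝒲) ∧ ¬ ∀ i j, W i = W j} from ⟨h1, h2⟩) h3
  refine measure_mono_null hsub ?_
  have hfin' : {W : Fin 4 → AffineSubspace ℝ E3 |
      (∀ i, W i ∈ 𝒲) ∧ ¬ ∀ i j, W i = W j}.Finite :=
    (Set.Finite.pi' (fun _ : Fin 4 => hfin)).subset fun W hW => hW.1
  rw [measure_biUnion_null_iff hfin'.countable]
  rintro W ⟨hW, hne⟩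
  have hs : ∃ i : Fin 3, reflAff (W i.succ) L ≠ reflAff (W 0) L := by
    by_contra! hcon
    have hall : ∀ i, W i = W 0 := by
      intro i
      refine Fin.cases rfl (fun k => ?_) i
      exact refl_inj _ _ L (hplane _ (hW _)) (hplane _ (hW _)) (hL _ (hW _)) (hL _ (hW _))
        (hcon k)
    exact hne fun i j => (hall i).trans (hall j).symm
  obtain ⟨m₀, hm₀⟩ := fM_witness (fun i => reflAff (W i) L) hs
  exact null_of_line volume (fun m => fM m (fun i => ‖reflAff (W i) L - m i‖ ^ 2))
    (fM_cont _) m₀ hm₀ (fun v => fM_poly _ m₀ v)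

end
end

section
/- Let W₁, W₂, W₃, W₄ ⊂ ℝ³ be four affine planes that are not all equal, let m₁^ini,…,m₄^ini ∈ ℝ³ be non-coplanar points, and let L_ini ∈ ℝ³. Then there exist a rotation R ∈ SO(3) and a translation t ∈ ℝ³ such that, setting m_i := R m_i^ini + t and L := R L_ini + t, one has f_M(‖ref_{W₁}(L) − m₁‖², ‖ref_{W₂}(L) − m₂‖², ‖ref_{W₃}(L) − m₃‖², ‖ref_{W₄}(L) − m₄‖²) ≠ 0, where f_M is formed from the pairwise squared distances of m₁,…,m₄. -/
open scoped RealInnerProductSpace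

noncomputable section

def AI (m : Fin 4 → E3) : Prop :=
  ∀ w : Fin 4 → ℝ, ∑ i, w i = 0 → ∑ i, w i • m i = 0 → ∀ i, w i = 0

lemma normsq3 (x : E3) : ‖x‖ ^ 2 = x 0 ^ 2 + x 1 ^ 2 + x 2 ^ 2 := by
  rw [EuclideanSpace.norm_sq_eq]; simp [Fin.sum_univ_three]

set_option maxHeartbeats 1000000 in
lemma fM_zero (m : Fin 4 → E3) (hm : AI m) (u : Fin 4 → ℝ) (h : fM m u = 0) :
    ∃ x : E3, ∀ i, ‖x - m i‖ ^ 2 = u i := by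
  obtain ⟨v, hv0, hv⟩ := Matrix.exists_mulVec_eq_zero_iff.mpr h
  have e0 := congrFun hv 0
  have e1 := congrFun hv 1
  have e2 := congrFun hv 2
  have e3 := congrFun hv 3
  have e4 := congrFun hv 4
  have e5 := congrFun hv 5
  simp [Matrix.mulVec, dotProduct, Fin.sum_univ_six, -sub_self] at e0 e1 e2 e3 e4 e5
  by_cases ha : v 0 = 0
  · exfalso
    apply hv0
    have hs : ∑ i, (![v 1, v 2, v 3, v 4] : Fin 4 → ℝ) i • m i = 0 := by
      rw [← norm_eq_zero, ← sq_eq_zero_iff, normsq3]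
      simp only [normsq3] at e1 e2 e3 e4
      simp [Fin.sum_univ_four] at e1 e2 e3 e4 ⊢
      simp only [ha] at *
      have e5' : v 1 + v 2 + v 3 + v 4 = 0 := by linarith
      linear_combination (-1/2) * (v 1 * e1 + v 2 * e2 + v 3 * e3 + v 4 * e4) + e5' * (v 5 / 2
        + v 1 * (m 0 0 ^ 2 + m 0 1 ^ 2 + m 0 2 ^ 2) + v 2 * (m 1 0 ^ 2 + m 1 1 ^ 2 + m 1 2 ^ 2)
        + v 3 * (m 2 0 ^ 2 + m 2 1 ^ 2 + m 2 2 ^ 2) + v 4 * (m 3 0 ^ 2 + m 3 1 ^ 2 + m 3 2 ^ 2))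
    have := hm ![v 1, v 2, v 3, v 4] (by simp [Fin.sum_univ_four]; linarith) hs
    have h1 := this 0
    have h2 := this 1
    have h3 := this 2
    have h4 := this 3
    simp at h1 h2 h3 h4
    simp [ha, h1, h2, h3, h4] at e1
    ext i
    fin_cases i <;> simp [*]
  · obtain ⟨b, hb⟩ : ∃ b : Fin 6 → ℝ, ∀ i, v i = - v 0 * b i :=
      ⟨fun i => - v i / v 0, fun i => by field_simp⟩
    have hb0 : b 0 = -1 := by
      have := hb 0
      have : v 0 * (b 0 + 1) = 0 := by linarith
      rcases mul_eq_zero.mp this with h | h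
      · exact absurd h ha
      · linarith
    set a := v 0 with haa
    rw [hb 1, hb 2, hb 3, hb 4, hb 5] at e0 e1 e2 e3 e4
    rw [hb 1, hb 2, hb 3, hb 4] at e5
    have cancel : ∀ z : ℝ, a * z = 0 → z = 0 := fun z hz => (mul_eq_zero.mp hz).resolve_left ha
    simp only [normsq3] at e1 e2 e3 e4
    simp at e1 e2 e3 e4
    replace e0 := cancel (u 0 * b 1 + u 1 * b 2 + u 2 * b 3 + u 3 * b 4 + b 5) (by linarith)
    replace e5 := cancel (b 1 + b 2 + b 3 + b 4 - 1) (by linarith)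
    let x : E3 := b 1 • m 0 + b 2 • m 1 + b 3 • m 2 + b 4 • m 3
    let d : Fin 4 → Fin 4 → ℝ := fun i j =>
      (m i 0 - m j 0) ^ 2 + (m i 1 - m j 1) ^ 2 + (m i 2 - m j 2) ^ 2
    let S : ℝ := b 1 * ‖x - m 0‖ ^ 2 + b 2 * ‖x - m 1‖ ^ 2 + b 3 * ‖x - m 2‖ ^ 2 + b 4 * ‖x - m 3‖ ^ 2
    have key : ∀ i, d i 0 * b 1 + d i 1 * b 2 + d i 2 * b 3 + d i 3 * b 4 = ‖x - m i‖ ^ 2 + S := by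
      intro i
      simp only [S, normsq3, d, x]
      simp
      have h4 : b 4 = 1 - b 1 - b 2 - b 3 := by linarith
      rw [h4]; ring
    have k0 := key 0
    have k1 := key 1
    have k2 := key 2
    have k3 := key 3
    have f0 : u 0 = ‖x - m 0‖ ^ 2 + S + b 5 := by
      rw [← k0]
      have := cancel (u 0 - (d 0 0 * b 1 + d 0 1 * b 2 + d 0 2 * b 3 + d 0 3 * b 4) - b 5)
        (by simp only [d]; linear_combination e1)
      linarith
    have f1 : u 1 = ‖x - m 1‖ ^ 2 + S + b 5 := by
      rw [← k1]
      have := cancel (u 1 - (d 1 0 * b 1 + d 1 1 * b 2 + d 1 2 * b 3 + d 1 3 * b 4) - b 5)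
        (by simp only [d]; linear_combination e2)
      linarith
    have f2 : u 2 = ‖x - m 2‖ ^ 2 + S + b 5 := by
      rw [← k2]
      have := cancel (u 2 - (d 2 0 * b 1 + d 2 1 * b 2 + d 2 2 * b 3 + d 2 3 * b 4) - b 5)
        (by simp only [d]; linear_combination e3)
      linarith
    have f3 : u 3 = ‖x - m 3‖ ^ 2 + S + b 5 := by
      rw [← k3]
      have := cancel (u 3 - (d 3 0 * b 1 + d 3 1 * b 2 + d 3 2 * b 3 + d 3 3 * b 4) - b 5)
        (by simp only [d]; linear_combination e4)
      linarith
    have hS : S = b 1 * ‖x - m 0‖ ^ 2 + b 2 * ‖x - m 1‖ ^ 2 + b 3 * ‖x - m 2‖ ^ 2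
      + b 4 * ‖x - m 3‖ ^ 2 := rfl
    have hK : S + b 5 = 0 := by
      linear_combination (1/2) * (e0 - b 1 * f0 - b 2 * f1 - b 3 * f2 - b 4 * f3
        - (S + b 5) * e5 + hS)
    refine ⟨x, fun i => ?_⟩
    fin_cases i <;> simp only [Fin.zero_eta, Fin.mk_one, Fin.reduceFinMk] <;> linarith

lemma AI_inj {m : Fin 4 → E3} (hm : AI m) (y : E3) (h : ∀ i, ⟪y, m i - m 0⟫ = 0) : y = 0 := by
  let T : (Fin 3 → ℝ) →ₗ[ℝ] E3 := ∑ i, (LinearMap.proj i : (Fin 3 → ℝ) →ₗ[ℝ] ℝ).smulRight (m i.succ - m 0)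
  have hT : ∀ w, T w = ∑ i, w i • (m i.succ - m 0) := fun w => by simp [T, LinearMap.sum_apply]
  have inj : Function.Injective T := by
    rw [injective_iff_map_eq_zero]
    intro w hw
    rw [hT] at hw
    have := hm (Fin.cons (- ∑ i, w i) w) (by simp [Fin.sum_univ_succ]) (by
      rw [Fin.sum_univ_succ]
      simp only [Fin.cons_zero, Fin.cons_succ]
      rw [← hw]
      simp only [smul_sub, Finset.sum_sub_distrib, neg_smul, Finset.sum_smul]
      abel)
    ext i
    simpa using this i.succ
  have surj : Function.Surjective T :=
    (LinearMap.injective_iff_surjective_of_finrank_eq_finrank (by simp)).mp inj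
  obtain ⟨w, hw⟩ := surj y
  have : ⟪y, T w⟫ = 0 := by
    rw [hT, inner_sum]
    apply Finset.sum_eq_zero
    intro i _
    rw [inner_smul_right, h, mul_zero]
  rw [hw] at this
  exact inner_self_eq_zero.mp this

lemma AI_surj {m : Fin 4 → E3} (hm : AI m) (c : Fin 4 → ℝ) :
    ∃ y : E3, ∀ i, ⟪y, m i - m 0⟫ = c i - c 0 := by
  let T : E3 →ₗ[ℝ] (Fin 3 → ℝ) := LinearMap.pi (fun i : Fin 3 => innerₗ E3 (m i.succ - m 0))
  have hT : ∀ y i, T y i = ⟪y, m i.succ - m 0⟫ := fun y i => by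
    simp [T, real_inner_comm, inner_sub_right]
  have inj : Function.Injective T := by
    rw [injective_iff_map_eq_zero]
    intro y hy
    apply AI_inj hm
    intro i
    refine Fin.cases (by simp) (fun i => ?_) i
    rw [← hT, hy]; rfl
  have surj : Function.Surjective T :=
    (LinearMap.injective_iff_surjective_of_finrank_eq_finrank (by simp)).mp inj
  obtain ⟨y, hy⟩ := surj (fun i => c i.succ - c 0)
  refine ⟨y, fun i => ?_⟩
  refine Fin.cases (by simp) (fun i => ?_) i
  rw [← hT, hy]

lemma poly_lemma {a : Fin 4 → E3} (ha : AI a) (A B C : Fin 4 → ℝ)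
    (h : ∀ k : ℝ, ∃ y : E3, ∀ i, ‖y‖ ^ 2 - 2 * ⟪y, a i⟫ = A i * k ^ 2 + B i * k + C i) :
    (∀ i, A i = A 0) ∧ ∃ Y : E3, (∀ i, ⟪Y, a i - a 0⟫ = - (B i - B 0) / 2) ∧ ‖Y‖ ^ 2 = A 0 := by
  obtain ⟨Y2, h2⟩ := AI_surj ha (fun i => - A i / 2)
  obtain ⟨Y1, h1⟩ := AI_surj ha (fun i => - B i / 2)
  obtain ⟨Y0, h0⟩ := AI_surj ha (fun i => - C i / 2)
  have key : ∀ k : ℝ, k ^ 4 * ⟪Y2, Y2⟫ + 2 * k ^ 3 * ⟪Y2, Y1⟫ + k ^ 2 * (⟪Y1, Y1⟫ + 2 * ⟪Y2, Y0⟫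
      - 2 * ⟪Y2, a 0⟫ - A 0) + k * (2 * ⟪Y1, Y0⟫ - 2 * ⟪Y1, a 0⟫ - B 0) +
      (⟪Y0, Y0⟫ - 2 * ⟪Y0, a 0⟫ - C 0) = 0 := by
    intro k
    obtain ⟨y, hy⟩ := h k
    have : y - (k ^ 2 • Y2 + k • Y1 + Y0) = 0 := by
      apply AI_inj ha
      intro i
      rw [inner_sub_left, inner_add_left, inner_add_left, real_inner_smul_left,
        real_inner_smul_left, h2, h1, h0, inner_sub_right]
      linear_combination (-1/2) * hy i + (1/2) * hy 0
    rw [sub_eq_zero] at this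
    have e := hy 0
    rw [this, ← real_inner_self_eq_norm_sq] at e
    simp only [inner_add_left, inner_add_right, real_inner_smul_left, real_inner_smul_right] at e
    rw [real_inner_comm Y2 Y1, real_inner_comm Y2 Y0, real_inner_comm Y1 Y0] at e
    linear_combination e
  have k0 := key 0
  have k1 := key 1
  have k2 := key (-1)
  have k3 := key 2
  have k4 := key (-2)
  have z : ⟪Y2, Y2⟫ = 0 := by linarith
  have z' : Y2 = 0 := inner_self_eq_zero.mp z
  subst z'
  simp at k0 k1 k2 h2
  refine ⟨fun i => by linarith [h2 i], Y1, fun i => by rw [h1]; ring, ?_⟩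
  linarith

lemma plane_rep {W : AffineSubspace ℝ E3} (h : IsPlane W) :
    ∃ (n : E3) (c : ℝ), ‖n‖ = 1 ∧ ∀ x, x ∈ W ↔ ⟪n, x⟫ = c := by
  obtain ⟨⟨p, hp⟩, hd⟩ := h
  have hr : Module.finrank ℝ W.directionᗮ = 1 := by
    have := W.direction.finrank_add_finrank_orthogonal
    rw [hd] at this
    simp at this
    omega
  obtain ⟨v, hv0, hv⟩ := finrank_eq_one_iff'.mp hr
  have hv0' : (v : E3) ≠ 0 := by simpa using hv0
  have hnv : ‖(v : E3)‖ ≠ 0 := norm_ne_zero_iff.mpr hv0'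
  refine ⟨(‖(v : E3)‖)⁻¹ • (v : E3), ⟪(‖(v : E3)‖)⁻¹ • (v : E3), p⟫, ?_, ?_⟩
  · rw [norm_smul, norm_inv, norm_norm, inv_mul_cancel₀ hnv]
  · intro x
    have h1 : x ∈ W ↔ x -ᵥ p ∈ W.direction := (AffineSubspace.vsub_right_mem_direction_iff_mem hp x).symm
    have h5 : x -ᵥ p ∈ W.direction ↔ x -ᵥ p ∈ W.directionᗮᗮ := by
      rw [W.direction.orthogonal_orthogonal]
    rw [h1, h5, Submodule.mem_orthogonal]
    rw [real_inner_smul_left, real_inner_smul_left, mul_right_inj' (inv_ne_zero hnv), ← sub_eq_zero,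
      ← inner_sub_right]
    constructor
    · intro h; exact h v v.2
    · intro h u hu
      obtain ⟨c, hc⟩ := hv ⟨u, hu⟩
      have : u = c • (v : E3) := by
        have := congrArg Subtype.val hc
        simpa using this.symm
      rw [this, real_inner_smul_left]
      simp only [vsub_eq_sub]
      rw [h, mul_zero]

lemma reflAff_eq {W : AffineSubspace ℝ E3} {n : E3} {c : ℝ} (hn : ‖n‖ = 1)
    (h : ∀ x, x ∈ W ↔ ⟪n, x⟫ = c) (L : E3) :
    reflAff W L = L - (2 * (⟪n, L⟫ - c)) • n := by
  have hnn : ⟪n, n⟫ = 1 := by rw [real_inner_self_eq_norm_sq, hn]; norm_num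
  have hq : L - (⟪n, L⟫ - c) • n ∈ W := by
    rw [h, inner_sub_right, real_inner_smul_right, hnn]; ring
  have hne : Nonempty W := ⟨⟨_, hq⟩⟩
  rw [reflAff, dif_pos hne]
  have hp : (EuclideanGeometry.orthogonalProjection W L : E3) = L - (⟪n, L⟫ - c) • n := by
    rw [EuclideanGeometry.coe_orthogonalProjection_eq_iff_mem]
    refine ⟨hq, ?_⟩
    rw [Submodule.mem_orthogonal]
    intro u hu
    have h2 := AffineSubspace.vadd_mem_of_mem_direction hu hq
    rw [h] at hq h2
    rw [vadd_eq_add, inner_add_right, hq] at h2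
    have h3 : ⟪n, u⟫ = 0 := by linarith
    simp [real_inner_smul_right, real_inner_comm, h3]
  rw [EuclideanGeometry.reflection_apply', hp]
  simp only [vsub_eq_sub, vadd_eq_add]
  module

def Dg (a b c : ℝ) : Matrix (Fin 3) (Fin 3) ℝ := Matrix.diagonal ![a, b, c]

lemma Rinner {R : Matrix (Fin 3) (Fin 3) ℝ} (hR : R * R.transpose = 1) (x y : E3) :
    ⟪Matrix.toEuclideanLin R x, Matrix.toEuclideanLin R y⟫ = ⟪x, y⟫ := by
  have hR' : R.transpose * R = 1 := mul_eq_one_comm.mp hR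
  have h1 : (Matrix.toEuclideanLin R.transpose) (Matrix.toEuclideanLin R y) = y := by
    simp [Matrix.toLpLin_apply, Matrix.mulVec_mulVec, hR']
  have h2 := Matrix.toEuclideanLin_conjTranspose_eq_adjoint R
  rw [Matrix.conjTranspose_eq_transpose_of_trivial] at h2
  rw [← LinearMap.adjoint_inner_right, ← h2, h1]

lemma AI_rot {R : Matrix (Fin 3) (Fin 3) ℝ} (hR : R * R.transpose = 1) {m : Fin 4 → E3} (hm : AI m)
    (t : E3) : AI (fun i => Matrix.toEuclideanLin R (m i) + t) := by
  intro w hw hs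
  apply hm w hw
  simp only [smul_add, Finset.sum_add_distrib, ← Finset.sum_smul, hw, zero_smul, add_zero] at hs
  simp only [← map_smul, ← map_sum] at hs
  rw [← inner_self_eq_zero (𝕜 := ℝ), ← Rinner hR, hs, inner_zero_left]

lemma step {W : Fin 4 → AffineSubspace ℝ E3} {n : Fin 4 → E3} {c : Fin 4 → ℝ}
    (hn : ∀ i, ‖n i‖ = 1) (hW : ∀ i x, x ∈ W i ↔ ⟪n i, x⟫ = c i)
    {mini : Fin 4 → E3} (hm : AI mini) (Lini : E3)
    {R : Matrix (Fin 3) (Fin 3) ℝ} (hR : R * R.transpose = 1)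
    (H : ∀ t : E3, fM (fun i => Matrix.toEuclideanLin R (mini i) + t)
        (fun i => ‖reflAff (W i) (Matrix.toEuclideanLin R Lini + t)
          - (Matrix.toEuclideanLin R (mini i) + t)‖ ^ 2) = 0) (l : E3) :
    (∀ i, ⟪n i, l⟫ ^ 2 = ⟪n 0, l⟫ ^ 2) ∧
    ∃ Y : E3, (∀ i, ⟪Y, Matrix.toEuclideanLin R (mini i - mini 0)⟫ =
      -2 * (⟪n i, l⟫ * (⟪n i, Matrix.toEuclideanLin R (mini i - Lini)⟫ - 2 * c i)
        - ⟪n 0, l⟫ * (⟪n 0, Matrix.toEuclideanLin R (mini 0 - Lini)⟫ - 2 * c 0)))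
      ∧ ‖Y‖ ^ 2 = 4 * ⟪n 0, l⟫ ^ 2 := by
  have ha := AI_rot hR hm (- Matrix.toEuclideanLin R Lini)
  set a : Fin 4 → E3 := fun i => Matrix.toEuclideanLin R (mini i) + - Matrix.toEuclideanLin R Lini
    with haa
  have ha' : ∀ i, Matrix.toEuclideanLin R (mini i - Lini) = a i := fun i => by
    simp [haa, sub_eq_add_neg]
  obtain ⟨h1, Y, h2, h3⟩ := poly_lemma ha (fun i => 4 * ⟪n i, l⟫ ^ 2)
    (fun i => 4 * (⟪n i, l⟫ * (⟪n i, a i⟫ - 2 * c i)))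
    (fun i => 4 * (c i ^ 2 - c i * ⟪n i, a i⟫)) (by
      intro k
      set t := k • l - Matrix.toEuclideanLin R Lini with ht
      obtain ⟨x, hx⟩ := fM_zero _ (AI_rot hR hm t) _ (H t)
      refine ⟨x - k • l, fun i => ?_⟩
      have e := hx i
      have e1 : Matrix.toEuclideanLin R Lini + t = k • l := by rw [ht]; abel
      have e2 : Matrix.toEuclideanLin R (mini i) + t = a i + k • l := by
        simp only [ht, haa]; abel
      have hnn : ⟪n i, n i⟫ = 1 := by rw [real_inner_self_eq_norm_sq, hn]; norm_num
      rw [e1, e2, reflAff_eq (hn i) (hW i)] at e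
      have e3 : x - (a i + k • l) = (x - k • l) - a i := by abel
      have e4 : k • l - (2 * (⟪n i, k • l⟫ - c i)) • n i - (a i + k • l)
        = - (a i + (2 * (⟪n i, k • l⟫ - c i)) • n i) := by abel
      rw [e3, e4, norm_neg, norm_sub_sq_real, norm_add_sq_real (a i), norm_smul, hn, real_inner_smul_right,
        real_inner_smul_right, mul_one, Real.norm_eq_abs, sq_abs, real_inner_comm (n i) (a i)] at e
      linear_combination e)
  refine ⟨fun i => by have := h1 i; linarith, Y, fun i => ?_, h3⟩
  have e5 : Matrix.toEuclideanLin R (mini i - mini 0) = a i - a 0 := by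
    simp [haa]
  rw [e5, h2, ha', ha']
  ring

lemma four_rot (n Z : E3) (r : ℝ) (h : ∀ R : Matrix (Fin 3) (Fin 3) ℝ, R * R.transpose = 1 →
    R.det = 1 → r = 4 * ⟪n, Matrix.toEuclideanLin R Z⟫) : r = 0 := by
  have g : ∀ a b c : ℝ, a ^ 2 = 1 → b ^ 2 = 1 → c ^ 2 = 1 → a * b * c = 1 →
      r = 4 * (a * (n 0 * Z 0) + b * (n 1 * Z 1) + c * (n 2 * Z 2)) := by
    intro a b c ha hb hc habc
    have := h (Dg a b c) (by
      rw [Dg, Matrix.diagonal_transpose, Matrix.diagonal_mul_diagonal, ← Matrix.diagonal_one]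
      congr 1
      ext i
      fin_cases i <;> simp [← sq, ha, hb, hc]) (by
      rw [Dg, Matrix.det_diagonal]; simp [Fin.prod_univ_three, habc])
    rw [this, PiLp.inner_apply]
    simp [Fin.sum_univ_three, Dg, Matrix.toLpLin_apply, Matrix.mulVec_diagonal]
    ring
  have g1 := g 1 1 1 (by norm_num) (by norm_num) (by norm_num) (by norm_num)
  have g2 := g 1 (-1) (-1) (by norm_num) (by norm_num) (by norm_num) (by norm_num)
  have g3 := g (-1) 1 (-1) (by norm_num) (by norm_num) (by norm_num) (by norm_num)
  have g4 := g (-1) (-1) 1 (by norm_num) (by norm_num) (by norm_num) (by norm_num)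
  linarith

lemma main_aux
    (W : Fin 4 → AffineSubspace ℝ E3) (hplane : ∀ i, IsPlane (W i))
    (mini : Fin 4 → E3) (hm : AI mini) (Lini : E3)
    (H : ∀ (R : Matrix (Fin 3) (Fin 3) ℝ) (t : E3),
      R * R.transpose = 1 → R.det = 1 →
      fM (fun i => Matrix.toEuclideanLin R (mini i) + t)
        (fun i => ‖reflAff (W i) (Matrix.toEuclideanLin R Lini + t)
          - (Matrix.toEuclideanLin R (mini i) + t)‖ ^ 2) = 0) : ∀ i, W i = W 0 := by
  choose n' c' hn' hW' using fun i => plane_rep (hplane i)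
  have hpm : ∀ i, ∃ c, ∀ x, x ∈ W i ↔ ⟪n' 0, x⟫ = c := by
    intro i
    have h := (step hn' hW' hm Lini (R := 1) (by simp) (fun t => H 1 t (by simp) (by simp)) (n' 0)).1 i
    rw [real_inner_self_eq_norm_sq, hn' 0] at h
    have h' : ⟪n' i, n' 0⟫ = 1 ∨ ⟪n' i, n' 0⟫ = -1 := by
      have h6 : ⟪n' i, n' 0⟫ ^ 2 = 1 := by linarith
      exact (sq_eq_sq_iff_eq_or_eq_neg.mp (h6.trans (one_pow 2).symm))
    rcases h' with h' | h'
    · have : n' i = n' 0 := (inner_eq_one_iff_of_norm_eq_one (hn' i) (hn' 0)).mp h'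
      exact ⟨c' i, fun x => by rw [hW', this]⟩
    · have : n' i = - n' 0 := by
        apply (inner_eq_one_iff_of_norm_eq_one (𝕜 := ℝ) (hn' i) (by rw [norm_neg, hn'])).mp
        rw [inner_neg_right, h', neg_neg]
      exact ⟨- c' i, fun x => by rw [hW', this, inner_neg_left, neg_eq_iff_eq_neg]⟩
  choose c hc using hpm
  set n := n' 0 with hnn
  have hn : ‖n‖ = 1 := hn' 0
  have hnn1 : ⟪n, n⟫ = 1 := by rw [real_inner_self_eq_norm_sq, hn]; norm_num
  obtain ⟨Z, hZ⟩ := AI_surj hm (fun i => 4 * c i)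
  have hz : ‖Z‖ ^ 2 = 0 := by
    apply four_rot n Z
    intro R hR hd
    obtain ⟨-, Y, h1, h2⟩ := step (n := fun _ => n) (c := c) (fun _ => hn) hc hm Lini hR
      (fun t => H R t hR hd) n
    simp only [hnn1] at h1 h2
    have hY : Y + (2 : ℝ) • n - Matrix.toEuclideanLin R Z = 0 := by
      apply AI_inj (AI_rot hR hm 0)
      intro i
      simp only [add_zero]
      rw [← map_sub, inner_sub_left, inner_add_left, Rinner hR, hZ, h1, real_inner_smul_left]
      simp only [map_sub, inner_sub_right]
      ring
    have hY' : Y = Matrix.toEuclideanLin R Z - (2 : ℝ) • n := by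
      rw [eq_sub_iff_add_eq]; exact sub_eq_zero.mp hY
    rw [hY', norm_sub_sq_real, norm_smul, hn, real_inner_smul_right, ← real_inner_self_eq_norm_sq,
      Rinner hR, real_inner_self_eq_norm_sq, real_inner_comm] at h2
    norm_num at h2
    linarith
  have hZ0 : Z = 0 := by simpa using hz
  intro i
  have hci := hZ i
  rw [hZ0, inner_zero_left] at hci
  ext x
  rw [hc i, hc 0]
  have : c i = c 0 := by linarith
  rw [this]

/-- Claim 2' (loudspeaker on the drone): for four affine planes not all equal,
non-coplanar initial microphone positions, and an initial loudspeaker position, there is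
a placement (rotation `R ∈ SO(3)` and translation `t`) of the drone such that the echo
sorting criterion does not vanish. -/
theorem exists_good_placement_moving_source
    (W : Fin 4 → AffineSubspace ℝ E3) (hplane : ∀ i, IsPlane (W i))
    (hW : ¬ ∀ i j, W i = W j)
    (mini : Fin 4 → E3) (hm : AffineIndependent ℝ mini) (Lini : E3) :
    ∃ (R : Matrix (Fin 3) (Fin 3) ℝ) (t : E3),
      R * R.transpose = 1 ∧ R.det = 1 ∧
      fM (fun i => Matrix.toEuclideanLin R (mini i) + t)
        (fun i => ‖reflAff (W i) (Matrix.toEuclideanLin R Lini + t)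
          - (Matrix.toEuclideanLin R (mini i) + t)‖ ^ 2) ≠ 0 := by
  by_contra hcon
  push Not at hcon
  have hAI : AI mini := fun w h1 h2 i =>
    affineIndependent_iff.mp hm Finset.univ w h1 h2 i (Finset.mem_univ i)
  have := main_aux W hplane mini hAI Lini hcon
  exact hW fun i j => (this i).trans (this j).symm

end
end
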